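/- arXiv:1710.01459 — 4 statements merged into one kernel-verified Lean document; each statement's English description precedes it below -/
import Mathlib

section
/- (Lemma 11.4 of the paper.) Assume a ∈ ℕ and a + D·(d₁ + … + d_l) < d. Then the set of a-dimensional complex subspaces E₀ of E such that E₀ ∩ F(v) = {0} for every v ∈ V is dense in the Grassmannian of a-dimensional subspaces of E; concretely: for every a-dimensional complex subspace E₁ of E and every ε > 0 there exists a ℂ-linear automorphism g of E with operator norm ‖g − id_E‖ < ε such that g(E₁) ∩ F(v) = {0} for all v ∈ V. -/
open scoped Manifold
open Bundle TopologicalSpace Module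

lemma aux_generic {P E V T : Type} [NormedAddCommGroup P] [NormedSpace ℝ P]
    [FiniteDimensional ℝ P] [NormedAddCommGroup E] [NormedSpace ℂ E] [FiniteDimensional ℂ E]
    [Countable T] (F : V → Submodule ℂ E) (f : T → P → E) (S : T → Set P)
    (hS : ∀ t, Convex ℝ (S t)) (hf : ∀ t, ContDiffOn ℝ 1 (f t) (S t))
    (hcov : ∀ v, ∀ y ∈ F v, ∃ t, ∃ p ∈ S t, f t p = y) (n : ℕ)
    (hn : finrank ℝ P + 2 * n < 2 * finrank ℂ E + 2) (e : Fin n → E) (δ : ℝ) (hδ : 0 < δ) :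
    ∃ e' : Fin n → E, (∀ i, ‖e' i - e i‖ < δ) ∧
      ∀ v, ∀ c : Fin n → ℂ, ∑ i, c i • e' i ∈ F v → c = 0 := by
  induction n with
  | zero => exact ⟨e, fun i => i.elim0, fun v c _ => Subsingleton.elim _ _⟩
  | succ n ih =>
    obtain ⟨u, hu1, hu2⟩ := ih (by omega) (fun i => e i.succ)
    let G : T → P × (Fin n → ℂ) → E := fun t q => f t q.1 + ∑ i, q.2 i • u i
    let B : Set E := ⋃ t, G t '' (S t ×ˢ Set.univ)
    have hB : dimH B < finrank ℝ E := by
      have h1 : dimH B ≤ ((finrank ℝ P + 2 * n : ℕ) : ENNReal) := by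
        rw [dimH_iUnion]
        refine iSup_le fun t => ?_
        have hc : ContDiffOn ℝ 1 (G t) (S t ×ˢ Set.univ) := by
          refine ContDiffOn.add ?_ ?_
          · exact (hf t).comp contDiffOn_fst (fun q hq => hq.1)
          · apply ContDiff.contDiffOn
            fun_prop
        refine (hc.dimH_image_le ((hS t).prod convex_univ) subset_rfl).trans ?_
        refine (dimH_mono (Set.subset_univ _)).trans ?_
        rw [Real.dimH_univ_eq_finrank]
        have : finrank ℝ (P × (Fin n → ℂ)) = finrank ℝ P + 2 * n := by
          rw [finrank_prod, finrank_pi_fintype]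
          simp [Complex.finrank_real_complex, mul_comm]
        rw [this]
      refine h1.trans_lt ?_
      rw [finrank_real_of_complex]
      exact_mod_cast (by omega)
    obtain ⟨w, hw, hwB⟩ := (dense_compl_of_dimH_lt_finrank hB).exists_dist_lt (e 0) hδ
    refine ⟨Fin.cons w u, ?_, ?_⟩
    · intro i
      refine Fin.cases ?_ (fun j => ?_) i
      · simpa [← dist_eq_norm, dist_comm] using hwB
      · simpa using hu1 j
    · intro v c hc
      rw [Fin.sum_univ_succ] at hc
      simp only [Fin.cons_zero, Fin.cons_succ] at hc
      have h0 : c 0 = 0 := by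
        by_contra h0
        apply hw
        have h2 := (F v).smul_mem (c 0)⁻¹ hc
        obtain ⟨t, p, hp, hfp⟩ := hcov v _ h2
        refine Set.mem_iUnion.2 ⟨t, (p, fun i => -((c 0)⁻¹ * c i.succ)), ⟨hp, trivial⟩, ?_⟩
        simp only [G, hfp]
        rw [smul_add, smul_smul, inv_mul_cancel₀ h0, one_smul, Finset.smul_sum, add_assoc,
          ← Finset.sum_add_distrib]
        simp [smul_smul]
      rw [h0, zero_smul, zero_add] at hc
      have h3 := hu2 v _ hc
      ext i
      refine Fin.cases h0 (fun j => congrFun h3 j) i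

lemma aux_perturb {E V : Type} [NormedAddCommGroup E] [NormedSpace ℂ E] [FiniteDimensional ℂ E]
    (F : V → Submodule ℂ E) (E₁ : Submodule ℂ E) (ε : ℝ) (hε : 0 < ε)
    (H : ∀ (e : Fin (finrank ℂ E₁) → E) (δ : ℝ), 0 < δ →
      ∃ e' : Fin (finrank ℂ E₁) → E, (∀ i, ‖e' i - e i‖ < δ) ∧
      ∀ v, ∀ c : Fin (finrank ℂ E₁) → ℂ, ∑ i, c i • e' i ∈ F v → c = 0) :
    ∃ g : E ≃L[ℂ] E,
      ‖(g : E →L[ℂ] E) - ContinuousLinearMap.id ℂ E‖ < ε ∧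
      ∀ v : V, (Submodule.map ((g : E →L[ℂ] E) : E →ₗ[ℂ] E) E₁) ⊓ F v = ⊥ := by
  obtain ⟨p, hp⟩ := E₁.exists_isCompl
  have : CompleteSpace E := FiniteDimensional.complete ℂ E
  let b := finBasis ℂ E₁
  let pr : E →ₗ[ℂ] E₁ := E₁.projectionOnto p hp
  let φ : Fin (finrank ℂ E₁) → (E →L[ℂ] ℂ) := fun i => (b.coord i ∘ₗ pr).toContinuousLinearMap
  let C : ℝ := ∑ i, ‖φ i‖
  have hC : 0 ≤ C := Finset.sum_nonneg fun i _ => norm_nonneg _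
  let δ : ℝ := min ε 1 / (C + 1)
  have hδ : 0 < δ := by positivity
  obtain ⟨e', h1, h2⟩ := H (fun i => (b i : E)) δ hδ
  let T : E →L[ℂ] E := ∑ i, (φ i).smulRight (e' i - b i)
  have hT : ‖T‖ < min ε 1 := by
    calc ‖T‖ ≤ ∑ i, ‖(φ i).smulRight (e' i - b i)‖ := norm_sum_le _ _
      _ ≤ ∑ i, ‖φ i‖ * δ := by
        refine Finset.sum_le_sum fun i _ => ?_
        rw [ContinuousLinearMap.norm_smulRight_apply]
        gcongr
        exact (h1 i).le
      _ = C * δ := by rw [Finset.sum_mul]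
      _ < (C + 1) * δ := by nlinarith
      _ = min ε 1 := by simp only [δ]; field_simp
  have hT1 : ‖-T‖ < 1 := by rw [norm_neg]; exact hT.trans_le (min_le_right _ _)
  let g := ContinuousLinearEquiv.ofUnit (Units.oneSub (-T) hT1)
  have hg : (g : E →L[ℂ] E) = ContinuousLinearMap.id ℂ E + T := by
    ext x
    change (1 - -T) x = _
    simp
  refine ⟨g, ?_, ?_⟩
  · rw [hg, add_sub_cancel_left]
    exact hT.trans_le (min_le_left _ _)
  · intro v
    rw [eq_bot_iff]
    rintro y ⟨⟨x, hx, rfl⟩, hy⟩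
    have hpr : pr x = ⟨x, hx⟩ := Submodule.projectionOnto_apply_left hp ⟨x, hx⟩
    have hgx : ((g : E →L[ℂ] E) : E →ₗ[ℂ] E) x = ∑ i, b.repr ⟨x, hx⟩ i • e' i := by
      rw [hg]
      have h3 : x = ∑ i, b.repr ⟨x, hx⟩ i • (b i : E) := by
        have := congrArg E₁.subtype (b.sum_repr ⟨x, hx⟩)
        rw [map_sum] at this
        exact this.symm
      have h4 : T x = ∑ i, b.repr ⟨x, hx⟩ i • (e' i - b i) := by
        simp [T, φ, hpr]
      change x + T x = _
      rw [h4]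
      simp only [smul_sub, Finset.sum_sub_distrib]
      rw [← h3]
      abel
    have hy' := hy
    rw [SetLike.mem_coe, hgx] at hy'
    have h5 := h2 v _ hy'
    rw [hgx]
    simp [h5]

section
open scoped Topology

lemma aux_local {D r : ℕ} {E : Type} [NormedAddCommGroup E] [NormedSpace ℂ E]
    {B : Type} [TopologicalSpace B] [ChartedSpace (EuclideanSpace ℝ (Fin D)) B]
    (Ef : B → Type) [∀ x, AddCommGroup (Ef x)] [∀ x, Module ℂ (Ef x)]
    [∀ x, TopologicalSpace (Ef x)]
    [TopologicalSpace (TotalSpace (EuclideanSpace ℂ (Fin r)) Ef)]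
    [FiberBundle (EuclideanSpace ℂ (Fin r)) Ef]
    [VectorBundle ℂ (EuclideanSpace ℂ (Fin r)) Ef]
    (Fm : TotalSpace (EuclideanSpace ℂ (Fin r)) Ef → E)
    (hF : ContMDiff ((𝓡 D).prod 𝓘(ℝ, EuclideanSpace ℂ (Fin r))) 𝓘(ℝ, E) 1 Fm)
    (hlin : ∀ x, IsLinearMap ℂ (fun w : Ef x => Fm ⟨x, w⟩)) (x₀ : B) :
    ∃ φ : Fin r → EuclideanSpace ℝ (Fin D) → E,
      (∀ j, ContDiffAt ℝ 1 (φ j) (chartAt (EuclideanSpace ℝ (Fin D)) x₀ x₀)) ∧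
      ∀ᶠ x in 𝓝 x₀, Submodule.span ℂ (Set.range fun w : Ef x => Fm ⟨x, w⟩) ≤
        Submodule.span ℂ (Set.range fun j => φ j (chartAt (EuclideanSpace ℝ (Fin D)) x₀ x)) := by
  set c := chartAt (EuclideanSpace ℝ (Fin D)) x₀ with hc
  let tr := trivializationAt (EuclideanSpace ℂ (Fin r)) Ef x₀
  let G : EuclideanSpace ℝ (Fin D) × EuclideanSpace ℂ (Fin r) → E :=
    fun q => Fm (tr.toPartialEquiv.symm (c.symm q.1, q.2))
  let p : TotalSpace (EuclideanSpace ℂ (Fin r)) Ef := ⟨x₀, 0⟩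
  have hx₀ : x₀ ∈ tr.baseSet := mem_baseSet_trivializationAt _ _ _
  have hp : (tr p).2 = 0 := (tr.linear ℂ hx₀).map_zero
  have hG : ContDiffAt ℝ 1 G (c x₀, 0) := by
    have h := (contMDiffAt_iff.1 (hF p)).2
    rw [FiberBundle.extChartAt] at h
    have h2 : Set.range ((𝓡 D).prod 𝓘(ℝ, EuclideanSpace ℂ (Fin r))) = Set.univ := by
      simp
    rw [h2, contDiffWithinAt_univ] at h
    have h3 : (c x₀, (0 : EuclideanSpace ℂ (Fin r))) = ((trivializationAt (EuclideanSpace ℂ (Fin r)) Ef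
        p.proj).toPartialEquiv ≫ (extChartAt (𝓡 D) p.proj).prod
          (PartialEquiv.refl (EuclideanSpace ℂ (Fin r)))) p := by
      refine Prod.ext ?_ ?_
      · have hp1 : (tr p).1 = x₀ := tr.coe_fst' hx₀
        change c x₀ = c (tr p).1
        rw [hp1]
      · simpa using hp.symm
    rw [h3]
    exact h
  have hev : ∀ᶠ q in 𝓝 (c x₀, (0 : EuclideanSpace ℂ (Fin r))), ContDiffAt ℝ 1 G q :=
    hG.eventually (by simp)
  have hev2 : ∀ᶠ t : ℝ in 𝓝 0, ∀ j : Fin r,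
      ContDiffAt ℝ 1 G (c x₀, (t : ℂ) • EuclideanSpace.single j (1 : ℂ)) := by
    rw [Filter.eventually_all]
    intro j
    have : Filter.Tendsto (fun t : ℝ => (c x₀, (t : ℂ) • EuclideanSpace.single j (1 : ℂ)))
        (𝓝 0) (𝓝 (c x₀, 0)) := by
      have : Continuous (fun t : ℝ => (c x₀, (t : ℂ) • EuclideanSpace.single j (1 : ℂ))) := by
        fun_prop
      simpa using this.tendsto 0
    exact this.eventually hev
  obtain ⟨t, ht, ht0⟩ := ((hev2.filter_mono nhdsWithin_le_nhds).and
    (self_mem_nhdsWithin : ∀ᶠ t : ℝ in 𝓝[>] 0, t ∈ Set.Ioi (0 : ℝ))).exists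
  have ht0' : (t : ℂ) ≠ 0 := by exact_mod_cast (ne_of_gt ht0)
  refine ⟨fun j x => G (x, (t : ℂ) • EuclideanSpace.single j (1 : ℂ)), ?_, ?_⟩
  · intro j
    exact ContDiffAt.comp (g := G) (c x₀) (ht j) (contDiffAt_id.prodMk contDiffAt_const)
  · filter_upwards [tr.open_baseSet.mem_nhds hx₀, c.open_source.mem_nhds
      (mem_chart_source _ x₀)] with x hx hxc
    rw [Submodule.span_le]
    rintro _ ⟨w, rfl⟩
    let L : Ef x →ₗ[ℂ] E := (hlin x).mk' _
    have hGx : ∀ z, G (c x, z) = L (tr.symmₗ ℂ x z) := by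
      intro z
      simp only [G, c.left_inv hxc]
      rw [tr.symmₗ_apply hx]
      change _ = Fm ⟨x, tr.symm x z⟩
      congr 1
      exact (tr.mk_symm hx z).symm
    have hw : (L w : E) = (L ∘ₗ tr.symmₗ ℂ x) (tr.linearMapAt ℂ x w) := by
      simp [tr.symmₗ_linearMapAt hx]
    change L w ∈ _
    rw [hw]
    generalize tr.linearMapAt ℂ x w = z
    have hz : z = ∑ j, (z j * (t : ℂ)⁻¹) • ((t : ℂ) • EuclideanSpace.single j (1 : ℂ)) := by
      ext k
      simp [mul_assoc, inv_mul_cancel₀ ht0', Finset.sum_apply, Pi.single_apply]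
    rw [hz, map_sum]
    refine Submodule.sum_mem _ fun j _ => ?_
    rw [map_smul]
    refine Submodule.smul_mem _ _ (Submodule.subset_span ⟨j, ?_⟩)
    simp only [hGx]
    rfl

end

/-- **Lemma 11.4 of the paper.**
`E` is a complex normed space of dimension `d`, `V` a second-countable `C¹` real manifold
without boundary of dimension `D ≥ 1`; for `i = 1, …, l`, `K i` is a compact subset of the open
set `Vo i ⊆ V`, `Efam i` is a `C¹` complex vector bundle of rank `dI i` over `Vo i` (the `C¹`
structure being expressed through `C¹` coordinate changes), and `Fmap i` is a `C¹` map from its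
total space to `E` which is complex-linear on each fiber.  `F(v)` is the subspace of `E` spanned
by the images of the fibers over `v` of those bundles with `v ∈ K i`.  If
`a + D·(d₁ + … + d_l) < d`, then the set of `a`-dimensional subspaces `E₀` of `E` with
`E₀ ∩ F(v) = {0}` for all `v` is dense in the Grassmannian: every `a`-dimensional subspace `E₁`
can be moved into this set by an automorphism `g` of `E` with `‖g - id‖ < ε`. -/
theorem dense_subspaces_transverse_to_fiberwise_images
    {D l d a : ℕ} (hD : 1 ≤ D)
    {E : Type} [NormedAddCommGroup E] [NormedSpace ℂ E] [FiniteDimensional ℂ E]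
    (hd : finrank ℂ E = d)
    {V : Type} [TopologicalSpace V] [T2Space V] [SecondCountableTopology V]
    [ChartedSpace (EuclideanSpace ℝ (Fin D)) V]
    [HasGroupoid V (contDiffGroupoid 1 (𝓡 D))]
    (dI : Fin l → ℕ)
    (Vo : Fin l → Opens V) (K : Fin l → Set V)
    (hKcpt : ∀ i, IsCompact (K i)) (hKV : ∀ i, K i ⊆ (Vo i : Set V))
    (Efam : (i : Fin l) → (Vo i) → Type)
    [∀ i x, AddCommGroup (Efam i x)] [∀ i x, Module ℂ (Efam i x)]
    [∀ i x, TopologicalSpace (Efam i x)]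
    [∀ i, TopologicalSpace (TotalSpace (EuclideanSpace ℂ (Fin (dI i))) (Efam i))]
    [∀ i, FiberBundle (EuclideanSpace ℂ (Fin (dI i))) (Efam i)]
    [∀ i, VectorBundle ℂ (EuclideanSpace ℂ (Fin (dI i))) (Efam i)]
    -- the coordinate changes of each bundle are `C¹`
    (hbundle : ∀ i, ∀ (e e' : Trivialization (EuclideanSpace ℂ (Fin (dI i)))
        (Bundle.TotalSpace.proj (E := Efam i)))
        [MemTrivializationAtlas e] [MemTrivializationAtlas e'],
        ContMDiffOn (𝓡 D)
          𝓘(ℝ, EuclideanSpace ℂ (Fin (dI i)) →L[ℂ] EuclideanSpace ℂ (Fin (dI i))) 1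
          (fun b => (e.coordChangeL ℂ e' b :
            EuclideanSpace ℂ (Fin (dI i)) →L[ℂ] EuclideanSpace ℂ (Fin (dI i))))
          (e.baseSet ∩ e'.baseSet))
    (Fmap : (i : Fin l) → TotalSpace (EuclideanSpace ℂ (Fin (dI i))) (Efam i) → E)
    (hFC1 : ∀ i, ContMDiff ((𝓡 D).prod 𝓘(ℝ, EuclideanSpace ℂ (Fin (dI i)))) 𝓘(ℝ, E) 1 (Fmap i))
    (hFlin : ∀ i (x : Vo i), IsLinearMap ℂ (fun w : Efam i x => Fmap i ⟨x, w⟩))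
    (hdim : a + D * (∑ i, dI i) < d)
    (E₁ : Submodule ℂ E) (hE₁ : finrank ℂ E₁ = a)
    (ε : ℝ) (hε : 0 < ε) :
    ∃ g : E ≃L[ℂ] E,
      ‖(g : E →L[ℂ] E) - ContinuousLinearMap.id ℂ E‖ < ε ∧
      ∀ v : V,
        (Submodule.map ((g : E →L[ℂ] E) : E →ₗ[ℂ] E) E₁) ⊓
          (⨆ i, ⨆ (h : v ∈ K i),
            Submodule.span ℂ (Set.range fun w : Efam i ⟨v, hKV i h⟩ =>
              Fmap i ⟨⟨v, hKV i h⟩, w⟩)) = ⊥ := by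
  classical
  rcases Nat.eq_zero_or_pos (∑ i, dI i) with hs | hs
  · refine ⟨ContinuousLinearEquiv.refl ℂ E, ?_, fun v => ?_⟩
    · have : ((ContinuousLinearEquiv.refl ℂ E : E ≃L[ℂ] E) : E →L[ℂ] E)
          - ContinuousLinearMap.id ℂ E = 0 := by ext x; simp
      rw [this, norm_zero]
      exact hε
    · have : (⨆ i, ⨆ (h : v ∈ K i),
            Submodule.span ℂ (Set.range fun w : Efam i ⟨v, hKV i h⟩ =>
              Fmap i ⟨⟨v, hKV i h⟩, w⟩)) = ⊥ := by
        rw [eq_bot_iff]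
        refine iSup_le fun i => iSup_le fun h => ?_
        have hi : dI i = 0 := Finset.sum_eq_zero_iff.1 hs i (Finset.mem_univ _)
        have hsub : IsEmpty (Fin (dI i)) := by rw [hi]; infer_instance
        obtain ⟨φ, -, h2⟩ := aux_local (Efam i) (Fmap i) (hFC1 i) (hFlin i) ⟨v, hKV i h⟩
        refine h2.self_of_nhds.trans ?_
        rw [Set.range_eq_empty, Submodule.span_empty]
      rw [this, inf_bot_eq]
  have hloc : ∀ (v₀ : V) (i : Fin l), ∃ φ : Fin (dI i) → EuclideanSpace ℝ (Fin D) → E,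
      (∀ j, ContDiffAt ℝ 1 (φ j) (chartAt (EuclideanSpace ℝ (Fin D)) v₀ v₀)) ∧
      ∀ᶠ v in nhds v₀, (⨆ (h : v ∈ K i), Submodule.span ℂ
          (Set.range fun w : Efam i ⟨v, hKV i h⟩ => Fmap i ⟨⟨v, hKV i h⟩, w⟩)) ≤
        Submodule.span ℂ (Set.range fun j => φ j (chartAt (EuclideanSpace ℝ (Fin D)) v₀ v)) := by
    intro v₀ i
    by_cases hv : v₀ ∈ K i
    · obtain ⟨φ, h1, h2⟩ := aux_local (Efam i) (Fmap i) (hFC1 i) (hFlin i) ⟨v₀, hKV i hv⟩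
      refine ⟨φ, h1, ?_⟩
      rw [nhds_subtype_eq_comap, Filter.eventually_comap] at h2
      filter_upwards [h2] with v h3
      exact iSup_le fun h => h3 ⟨v, hKV i h⟩ rfl
    · refine ⟨fun _ _ => 0, fun j => contDiffAt_const, ?_⟩
      filter_upwards [(hKcpt i).isClosed.isOpen_compl.mem_nhds hv] with v h3
      exact iSup_le fun h => absurd h h3
  choose φ hφ1 hφ2 using hloc
  have hball : ∀ v₀ : V, ∃ r > 0, ∀ x ∈ Metric.ball (chartAt (EuclideanSpace ℝ (Fin D)) v₀ v₀) r,
      ∀ i j, ContDiffAt ℝ 1 (φ v₀ i j) x := by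
    intro v₀
    rw [← Metric.eventually_nhds_iff_ball, Filter.eventually_all]
    intro i
    rw [Filter.eventually_all]
    intro j
    exact (hφ1 v₀ i j).eventually (by simp)
  choose r hr hrC using hball
  let N : V → Set V := fun v₀ => {v | (∀ i, (⨆ (h : v ∈ K i), Submodule.span ℂ
          (Set.range fun w : Efam i ⟨v, hKV i h⟩ => Fmap i ⟨⟨v, hKV i h⟩, w⟩)) ≤
        Submodule.span ℂ
          (Set.range fun j => φ v₀ i j (chartAt (EuclideanSpace ℝ (Fin D)) v₀ v))) ∧
      chartAt (EuclideanSpace ℝ (Fin D)) v₀ v ∈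
        Metric.ball (chartAt (EuclideanSpace ℝ (Fin D)) v₀ v₀) (r v₀)}
  have hN : ∀ v₀, N v₀ ∈ nhds v₀ := by
    intro v₀
    refine Filter.Eventually.and (Filter.eventually_all.2 (hφ2 v₀)) ?_
    exact ((chartAt (EuclideanSpace ℝ (Fin D)) v₀).continuousAt (mem_chart_source _ v₀))
      (Metric.ball_mem_nhds _ (hr v₀))
  obtain ⟨T, hTc, hT⟩ := TopologicalSpace.countable_cover_nhds hN
  have : Countable T := hTc.to_subtype
  subst hE₁
  refine aux_perturb (fun v => ⨆ i, ⨆ (h : v ∈ K i),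
            Submodule.span ℂ (Set.range fun w : Efam i ⟨v, hKV i h⟩ =>
              Fmap i ⟨⟨v, hKV i h⟩, w⟩)) E₁ ε hε ?_
  intro e δ hδ
  let f : T → EuclideanSpace ℝ (Fin D) × ((Σ i, Fin (dI i)) → ℂ) → E :=
    fun t q => ∑ k : Σ i, Fin (dI i), q.2 k • φ t k.1 k.2 q.1
  let S : T → Set (EuclideanSpace ℝ (Fin D) × ((Σ i, Fin (dI i)) → ℂ)) :=
    fun t => Metric.ball (chartAt (EuclideanSpace ℝ (Fin D)) (t : V) (t : V)) (r t) ×ˢ Set.univ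
  refine aux_generic _ f S ?_ ?_ ?_ _ ?_ e δ hδ
  · exact fun t => (convex_ball _ _).prod convex_univ
  · intro t
    refine ContDiffOn.sum fun k _ => ?_
    refine ContDiffOn.smul ?_ ?_
    · apply ContDiff.contDiffOn
      fun_prop
    · intro q hq
      exact (ContDiffAt.comp q (hrC t q.1 hq.1 k.1 k.2) contDiffAt_fst).contDiffWithinAt
  · intro v y hy
    obtain ⟨t, ht, hvt⟩ : ∃ t ∈ T, v ∈ N t := by
      have := Set.mem_univ v
      rw [← hT] at this
      simpa using this
    have hle : (⨆ i, ⨆ (h : v ∈ K i),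
            Submodule.span ℂ (Set.range fun w : Efam i ⟨v, hKV i h⟩ =>
              Fmap i ⟨⟨v, hKV i h⟩, w⟩)) ≤ Submodule.span ℂ (Set.range
              fun k : Σ i, Fin (dI i) => φ t k.1 k.2
                (chartAt (EuclideanSpace ℝ (Fin D)) t v)) := by
      refine iSup_le fun i => (hvt.1 i).trans (Submodule.span_mono ?_)
      rintro _ ⟨j, rfl⟩
      exact ⟨⟨i, j⟩, rfl⟩
    obtain ⟨c, hc⟩ := (Submodule.mem_span_range_iff_exists_fun ℂ).1 (hle hy)
    exact ⟨⟨t, ht⟩, (chartAt (EuclideanSpace ℝ (Fin D)) t v, c), ⟨hvt.2, trivial⟩, hc⟩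
  · have h1 : finrank ℝ (EuclideanSpace ℝ (Fin D) × ((Σ i, Fin (dI i)) → ℂ))
        = D + 2 * ∑ i, dI i := by
      rw [finrank_prod, finrank_pi_fintype]
      simp [Complex.finrank_real_complex, mul_comm]
    rw [h1, hd]
    obtain ⟨D', rfl⟩ := Nat.exists_eq_add_of_le' hD
    obtain ⟨s', hs'⟩ := Nat.exists_eq_add_of_le' hs
    rw [hs'] at hdim ⊢
    nlinarith [Nat.zero_le (D' * s')]
end

section
/- (Dimension-counting claim used in the proof of Lemma 11.4 of the paper.) Let E be a real normed vector space of finite dimension n, and let N be a second-countable C¹ real manifold without boundary of dimension m with m < n. Then for every C¹ map f : N → E, the image f(N) is meagre in E; in particular the complement E ∖ f(N) is dense in E. -/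
open scoped Manifold

/-- **Dimension-counting claim used in the proof of Lemma 11.4.**
If `N` is a second-countable `C¹` real manifold without boundary of dimension `m`,
`E` is a real normed vector space of finite dimension `n`, and `m < n`, then the image of
any `C¹` map `f : N → E` is meagre in `E`; in particular its complement is dense. -/
theorem image_of_C1_map_is_meagre_of_dim_lt
    {m n : ℕ} (hmn : m < n)
    {E : Type} [NormedAddCommGroup E] [NormedSpace ℝ E]
    [FiniteDimensional ℝ E] (hE : Module.finrank ℝ E = n)
    {N : Type} [TopologicalSpace N] [T2Space N] [SecondCountableTopology N]
    [ChartedSpace (EuclideanSpace ℝ (Fin m)) N]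
    [HasGroupoid N (contDiffGroupoid 1 (𝓡 m))]
    (f : N → E) (hf : ContMDiff (𝓡 m) 𝓘(ℝ, E) 1 f) :
    IsMeagre (Set.range f) ∧ Dense (Set.range f)ᶜ := by
  haveI : IsManifold (𝓡 m) 1 N := IsManifold.mk' _ _ _
  have key : ∀ x : N, ∃ K ∈ nhds x, IsMeagre (f '' K) := by
    intro x
    let e := extChartAt (𝓡 m) x
    have ht : e.target ∈ nhds (e x) := extChartAt_target_mem_nhds x
    obtain ⟨r, hr, hsub⟩ := Metric.nhds_basis_closedBall.mem_iff.1 ht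
    have hg : ContDiffOn ℝ 1 (f ∘ e.symm) (Metric.closedBall (e x) r) := by
      have h1 : ContMDiffOn 𝓘(ℝ, EuclideanSpace ℝ (Fin m)) 𝓘(ℝ, E) 1 (f ∘ e.symm) e.target :=
        hf.comp_contMDiffOn (contMDiffOn_extChartAt_symm x)
      exact h1.contDiffOn.mono hsub
    have hd : Dense ((f ∘ e.symm) '' Metric.closedBall (e x) r)ᶜ := by
      refine hg.dense_compl_image_of_dimH_lt_finrank (convex_closedBall _ _) subset_rfl ?_
      refine (dimH_mono (Set.subset_univ _)).trans_lt ?_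
      rw [Real.dimH_univ_eq_finrank, hE, finrank_euclideanSpace_fin]
      exact_mod_cast hmn
    have hc : IsClosed ((f ∘ e.symm) '' Metric.closedBall (e x) r) :=
      ((isCompact_closedBall _ _).image_of_continuousOn hg.continuousOn).isClosed
    refine ⟨e.symm '' Metric.closedBall (e x) r, ?_, ?_⟩
    · have hpre : e ⁻¹' Metric.closedBall (e x) r ∈ nhds x :=
        (continuousAt_extChartAt x).preimage_mem_nhds (Metric.closedBall_mem_nhds _ hr)
      filter_upwards [hpre, extChartAt_source_mem_nhds (I := 𝓡 m) x] with y hy hys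
      exact ⟨e y, hy, e.left_inv hys⟩
    · rw [← Set.image_comp]
      exact residual_of_dense_open hc.isOpen_compl hd
  have hM : IsMeagre (Set.range f) := by
    choose K hK hKm using key
    obtain ⟨s, hs, hcov⟩ := TopologicalSpace.countable_cover_nhds hK
    rw [← Set.image_univ, ← hcov, Set.image_iUnion₂]
    haveI := hs.to_subtype
    rw [Set.biUnion_eq_iUnion]
    exact isMeagre_iUnion fun i => hKm i
  refine ⟨hM, ?_⟩
  haveI : CompleteSpace E := FiniteDimensional.complete ℝ E
  exact dense_of_mem_residual hM
end

section
/- (Lemma 11.6 of the paper, the Γ-equivariant version of Lemma 11.4.) Let d′ ∈ ℕ and assume that every finite-dimensional simple ℂ[Γ]-module has multiplicity strictly greater than d′ in E. Let E₁ be a Γ-invariant complex subspace of E and let a be the maximum, over finite-dimensional simple ℂ[Γ]-modules W, of the multiplicity of W in E₁. Assume a + g·D·(d₁ + … + d_l) < d′. Then for every ε > 0 there exists a Γ-equivariant ℂ-linear automorphism h of E with operator norm ‖h − id_E‖ < ε such that the Γ-invariant subspace E₀ = h(E₁) (which is isomorphic to E₁ as a Γ-module) satisfies E₀ ∩ F(v)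 = {0} for every v ∈ V. (The data V_i, K_i, 𝓔_i, F_i are not assumed Γ-equivariant.) -/
open scoped Manifold
open Bundle TopologicalSpace Module

/-- The `ℂ`-subspace of `Hom_ℂ(W, E)` consisting of the `Γ`-equivariant linear maps taking
values in a given subspace `E'` of `E`.  Its dimension is the multiplicity of `W` in `E'`. -/
def equivariantHomInto {Γ E W : Type*} [Monoid Γ]
    [AddCommGroup E] [Module ℂ E] [AddCommGroup W] [Module ℂ W]
    (ρ : Representation ℂ Γ E) (σW : Representation ℂ Γ W)
    (E' : Submodule ℂ E) : Submodule ℂ (W →ₗ[ℂ] E) where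
  carrier := {f | (∀ (γ : Γ) (w : W), f (σW γ w) = ρ γ (f w)) ∧ ∀ w : W, f w ∈ E'}
  add_mem' := by
    intro f g hf hg
    exact ⟨fun γ w => by simp [hf.1 γ w, hg.1 γ w],
      fun w => E'.add_mem (hf.2 w) (hg.2 w)⟩
  zero_mem' := ⟨fun γ w => by simp, fun w => E'.zero_mem⟩
  smul_mem' := by
    intro c f hf
    exact ⟨fun γ w => by simp [hf.1 γ w], fun w => E'.smul_mem c (hf.2 w)⟩

theorem generic_aux {H X A : Type*} [AddCommGroup H] [Module ℝ H]
    [NormedAddCommGroup X] [NormedSpace ℝ X] [FiniteDimensional ℝ X]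
    [NormedAddCommGroup A] [NormedSpace ℝ A] (T : H →ₗ[ℝ] X) (J : H →ₗ[ℝ] A)
    (s : Set X) (hs : dimH s < finrank ℝ (LinearMap.range T)) (c : X) (δ : ℝ) (hδ : 0 < δ) :
    ∃ y : H, ‖J y‖ < δ ∧ c + T y ∉ s := by
  by_contra hcon
  push Not at hcon
  obtain ⟨σ, hσ⟩ := T.rangeRestrict.exists_rightInverse_of_surjective T.range_rangeRestrict
  have hT : ∀ r, T (σ r) = (r : X) := fun r => by
    have := LinearMap.congr_fun hσ r
    exact congrArg Subtype.val this
  let U : Set (LinearMap.range T) := {r | ‖J (σ r)‖ < δ}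
  have hc : Continuous (fun r => J (σ r)) :=
    LinearMap.continuous_of_finiteDimensional (J ∘ₗ σ)
  have hU : U ∈ nhds (0 : LinearMap.range T) := by
    refine (isOpen_lt hc.norm continuous_const).mem_nhds ?_
    simp [hδ]
  have h1 := Real.dimH_of_mem_nhds hU
  have hiso : Isometry (fun r : LinearMap.range T => c + (r : X)) :=
    (isometry_add_left c).comp isometry_subtype_coe
  have h2 := hiso.dimH_image U
  have h3 : (fun r : LinearMap.range T => c + (r : X)) '' U ⊆ s := by
    rintro _ ⟨r, hr, rfl⟩
    have := hcon (σ r) hr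
    rwa [hT] at this
  have h4 := dimH_mono h3
  rw [h2, h1] at h4
  exact absurd hs (not_lt.2 h4)

theorem module_aux {R E V : Type*} [Ring R] [Algebra ℂ R] [NormedAddCommGroup E] [NormedSpace ℂ E]
    [FiniteDimensional ℂ E] [Module R E] [IsScalarTower ℂ R E] [IsSemisimpleModule R E]
    (F : V → Submodule R E) (N : ℕ) (hN : dimH (⋃ v, (F v : Set E)) ≤ N)
    (E₁ : Submodule R E)
    (hdim : ∀ S : Submodule R E, IsSimpleModule R S →
      N + 2 * finrank ℂ (S →ₗ[R] E₁) < 2 * finrank ℂ (S →ₗ[R] E)) (k : ℕ) :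
    ∀ (X : Submodule R E), X ≤ E₁ → finrank ℂ (X.restrictScalars ℂ) ≤ k → ∀ δ : ℝ, 0 < δ →
    ∃ h : E →ₗ[R] E,
      ‖LinearMap.toContinuousLinearMap (h.restrictScalars ℂ) - ContinuousLinearMap.id ℂ E‖ < δ ∧
      ∀ v, ∀ x ∈ X, h x ∈ F v → x = 0 := by
  induction k with
  | zero =>
    intro X hX hk δ hδ
    refine ⟨LinearMap.id, ?_, ?_⟩
    · have : LinearMap.toContinuousLinearMap
          ((LinearMap.id : E →ₗ[R] E).restrictScalars ℂ) - ContinuousLinearMap.id ℂ E = 0 := by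
        ext x; simp
      rw [this]; simpa using hδ
    · intro v x hx _
      have h0 : X.restrictScalars ℂ = ⊥ := by
        apply Submodule.finrank_eq_zero.1; omega
      have : x ∈ X.restrictScalars ℂ := hx
      rw [h0] at this
      simpa using this
  | succ k ih =>
    intro X hX hk δ hδ
    rcases eq_bot_or_exists_atom_le X with rfl | ⟨S, hS, hSX⟩
    · exact ih ⊥ hX (by
        have : (⊥ : Submodule R E).restrictScalars ℂ = ⊥ := by ext; simp
        rw [this]; simp) δ hδ
    have hsimp : IsSimpleModule R S := isSimpleModule_iff_isAtom.2 hS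
    obtain ⟨C, hSC⟩ := exists_isCompl S
    let P : E →ₗ[R] S := Submodule.projectionOnto S C hSC
    have hPS : ∀ t : S, P t = t := fun t => Submodule.projectionOnto_apply_left hSC t
    have hPC : ∀ x, P x = 0 ↔ x ∈ C := fun x => Submodule.projectionOnto_apply_eq_zero_iff hSC
    have hlt : X ⊓ C < X := by
      refine lt_of_le_of_ne inf_le_left ?_
      intro h
      have h1 : X ≤ C := inf_eq_left.1 h
      exact hS.1 (le_bot_iff.1 (hSC.disjoint le_rfl (hSX.trans h1)))
    have hlt' : finrank ℂ ((X ⊓ C).restrictScalars ℂ) < finrank ℂ (X.restrictScalars ℂ) := by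
      apply Submodule.finrank_lt_finrank_of_lt
      exact hlt
    obtain ⟨h', hh1, hh2⟩ := ih (X ⊓ C) (inf_le_left.trans hX) (by omega) (δ / 2) (half_pos hδ)
    obtain ⟨s, hs⟩ : ∃ s : S, s ≠ 0 := by
      have := hsimp.nontrivial
      exact exists_ne 0
    have hev : ∀ {M : Type _} [AddCommGroup M] [Module R M] (y : S →ₗ[R] M), y s = 0 → y = 0 := by
      intro M _ _ y hy
      rcases LinearMap.injective_or_eq_zero y with h | h
      · exact absurd (h (hy.trans (map_zero y).symm)) hs
      · exact h
    let T₀ : (S →ₗ[R] E) →ₗ[ℂ] E :=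
      { toFun := fun y => y s
        map_add' := fun _ _ => rfl
        map_smul' := fun _ _ => rfl }
    have hT₀ : Function.Injective T₀ := by
      rw [injective_iff_map_eq_zero]
      intro y hy
      exact hev y hy
    let Z₀ : (S →ₗ[R] E₁) →ₗ[ℂ] E :=
      { toFun := fun z => h' (z s)
        map_add' := fun a b => by simp
        map_smul' := fun c a => by
          exact (h'.restrictScalars ℂ).map_smul c (a s : E) }
    have hfin : FiniteDimensional ℂ (S →ₗ[R] E) := Module.Finite.of_injective T₀ hT₀
    let Z₁ : (S →ₗ[R] E₁) →ₗ[ℂ] (E₁.restrictScalars ℂ) :=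
      { toFun := fun z => z s
        map_add' := fun a b => rfl
        map_smul' := fun c a => rfl }
    have hfinZ : FiniteDimensional ℂ (S →ₗ[R] E₁) := Module.Finite.of_injective Z₁ (by
      rw [injective_iff_map_eq_zero]
      intro y hy
      rcases LinearMap.injective_or_eq_zero y with h | h
      · exact absurd (h (hy.trans (map_zero y).symm)) hs
      · exact h)
    let Q : Submodule ℂ E := LinearMap.range Z₀
    have hQc : IsClosed (Q : Set E) := Submodule.closed_of_finiteDimensional Q
    have hQ : finrank ℂ Q ≤ finrank ℂ (S →ₗ[R] E₁) := LinearMap.finrank_range_le Z₀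
    let T : (S →ₗ[R] E) →ₗ[ℂ] E ⧸ Q := Q.mkQ ∘ₗ T₀
    have hker : finrank ℂ (LinearMap.ker T) ≤ finrank ℂ Q := by
      have hmem : ∀ y : LinearMap.ker T, T₀ y ∈ Q := fun y => by
        have h0 : T y = 0 := LinearMap.mem_ker.1 y.2
        exact (Submodule.Quotient.mk_eq_zero Q).1 h0
      refine LinearMap.finrank_le_finrank_of_injective
        (f := (T₀ ∘ₗ (LinearMap.ker T).subtype).codRestrict Q hmem) ?_
      intro a b hab
      have := congrArg Subtype.val hab
      exact Subtype.ext (hT₀ this)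
    have hrn := LinearMap.finrank_range_add_finrank_ker T
    let J : (S →ₗ[R] E) →ₗ[ℂ] (E →L[ℂ] E) :=
      { toFun := fun y => LinearMap.toContinuousLinearMap ((y ∘ₗ P).restrictScalars ℂ)
        map_add' := fun a b => by ext; simp
        map_smul' := fun c a => by ext; simp }
    let B : Set (E ⧸ Q) := Q.mkQ '' (⋃ v, (F v : Set E))
    have hB : dimH B ≤ N := by
      refine le_trans ?_ hN
      have hl : LipschitzWith _ (LinearMap.toContinuousLinearMap Q.mkQ) :=
        (LinearMap.toContinuousLinearMap Q.mkQ).lipschitz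
      exact hl.dimH_image_le _
    have hrange : finrank ℝ (LinearMap.range (T.restrictScalars ℝ)) =
        2 * finrank ℂ (LinearMap.range T) := finrank_real_of_complex (LinearMap.range T)
    have hd := hdim S hsimp
    have : FiniteDimensional ℝ (E ⧸ Q) := FiniteDimensional.complexToReal _
    obtain ⟨y, hy1, hy2⟩ := generic_aux (T.restrictScalars ℝ) (J.restrictScalars ℝ) B
      (by
        refine lt_of_le_of_lt hB ?_
        rw [hrange]
        exact_mod_cast (by omega)) (Q.mkQ (h' s)) (δ / 2) (half_pos hδ)
    refine ⟨h' + y ∘ₗ P, ?_, ?_⟩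
    · have : LinearMap.toContinuousLinearMap ((h' + y ∘ₗ P).restrictScalars ℂ)
          - ContinuousLinearMap.id ℂ E =
          (LinearMap.toContinuousLinearMap (h'.restrictScalars ℂ) - ContinuousLinearMap.id ℂ E)
            + J y := by
        ext x; simp [J]; abel
      rw [this]
      refine lt_of_le_of_lt (norm_add_le _ _) ?_
      have hy1' : ‖J y‖ < δ / 2 := hy1
      linarith
    · intro v x hx hxF
      by_contra hx0
      let h : E →ₗ[R] E := h' + y ∘ₗ P
      let M : Submodule R E := X ⊓ (F v).comap h
      let p : M →ₗ[R] S := P ∘ₗ M.subtype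
      have hinj : Function.Injective p := by
        rw [injective_iff_map_eq_zero]
        intro m hm
        have hm' : P (m : E) = 0 := hm
        have h1 : h m ∈ F v := m.2.2
        have h2 : h m = h' m := by simp [h, hm']
        rw [h2] at h1
        exact Subtype.ext (hh2 v m ⟨m.2.1, (hPC _).1 hm'⟩ h1)
      have hxM : x ∈ M := ⟨hx, hxF⟩
      have hne : p ≠ 0 := by
        intro h0
        have : p ⟨x, hxM⟩ = p 0 := by rw [h0]; simp
        exact hx0 (congrArg Subtype.val (hinj this))
      let e := LinearEquiv.ofBijective p ⟨hinj, LinearMap.surjective_of_ne_zero hne⟩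
      have he : ∀ t, P (e.symm t : M) = t := fun t => e.apply_symm_apply t
      let z₀ : S →ₗ[R] E := M.subtype ∘ₗ e.symm.toLinearMap - S.subtype
      let z : S →ₗ[R] E₁ := z₀.codRestrict E₁ (fun t =>
        hX (X.sub_mem (e.symm t).2.1 (hSX t.2)))
      apply hy2
      refine ⟨h (e.symm s : M), Set.mem_iUnion.2 ⟨v, (e.symm s).2.2⟩, ?_⟩
      have h3 : h (e.symm s : M) = h' s + y s + Z₀ z := by
        have : Z₀ z = h' ((e.symm s : M) - s : E) := rfl
        rw [this, map_sub]
        simp [h, he]; abel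
      have h4 : Q.mkQ (Z₀ z) = 0 := by simp [Q]
      rw [h3, map_add, h4, map_add, add_zero]
      rfl

theorem local_frame_aux {D n : ℕ}
    {E : Type} [NormedAddCommGroup E] [NormedSpace ℂ E]
    {V : Type} [TopologicalSpace V]
    [ChartedSpace (EuclideanSpace ℝ (Fin D)) V]
    (Vo : Opens V) (Efam : Vo → Type)
    [∀ x, AddCommGroup (Efam x)] [∀ x, Module ℂ (Efam x)]
    [∀ x, TopologicalSpace (Efam x)]
    [TopologicalSpace (TotalSpace (EuclideanSpace ℂ (Fin n)) Efam)]
    [FiberBundle (EuclideanSpace ℂ (Fin n)) Efam]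
    [VectorBundle ℂ (EuclideanSpace ℂ (Fin n)) Efam]
    (Fmap : TotalSpace (EuclideanSpace ℂ (Fin n)) Efam → E)
    (hFC1 : ContMDiff ((𝓡 D).prod 𝓘(ℝ, EuclideanSpace ℂ (Fin n))) 𝓘(ℝ, E) 1 Fmap)
    (hFlin : ∀ (x : Vo), IsLinearMap ℂ (fun w : Efam x => Fmap ⟨x, w⟩))
    (v₀ : V) (hv₀ : v₀ ∈ Vo) :
    ∃ a : Fin n → EuclideanSpace ℝ (Fin D) → E,
      (∀ k, ContDiffAt ℝ 1 (a k) (chartAt (EuclideanSpace ℝ (Fin D)) v₀ v₀)) ∧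
      ∀ᶠ v in nhds v₀, ∀ hv : v ∈ Vo, ∀ w : Efam ⟨v, hv⟩,
        Fmap ⟨⟨v, hv⟩, w⟩ ∈ Submodule.span ℂ
          (Set.range fun k => a k (chartAt (EuclideanSpace ℝ (Fin D)) v₀ v)) := by
  let F := EuclideanSpace ℂ (Fin n)
  let x₀ : Vo := ⟨v₀, hv₀⟩
  let e := trivializationAt F Efam x₀
  let φ := chartAt (EuclideanSpace ℝ (Fin D)) v₀
  let ψ := chartAt (EuclideanSpace ℝ (Fin D)) x₀
  let b : Fin n → F := fun k => EuclideanSpace.single k 1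
  have hx₀ : x₀ ∈ e.baseSet := mem_baseSet_trivializationAt F Efam x₀
  let G : EuclideanSpace ℝ (Fin D) × F → E :=
    fun p => Fmap (e.toPartialEquiv.symm (ψ.symm p.1, p.2))
  have hψφ : ∀ (v : V) (hv : v ∈ Vo), ψ ⟨v, hv⟩ = φ v := fun v hv => rfl
  have hψsrc : ∀ (v : V) (hv : v ∈ Vo), v ∈ φ.source → (⟨v, hv⟩ : Vo) ∈ ψ.source := by
    intro v hv h
    have : ψ = φ.subtypeRestr ⟨x₀⟩ := rfl
    rw [this, OpenPartialHomeomorph.subtypeRestr_source]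
    exact h
  have hsym : ∀ (v : V) (hv : v ∈ Vo), v ∈ φ.source → ψ.symm (φ v) = ⟨v, hv⟩ := by
    intro v hv h
    rw [← hψφ v hv]
    exact ψ.left_inv (hψsrc v hv h)
  have hG : ∀ u : F, ContDiffAt ℝ 1 G (φ v₀, u) := by
    intro u
    let w : TotalSpace F Efam := ⟨x₀, e.symm x₀ u⟩
    have h1 := (contMDiffAt_iff.1 (hFC1 w)).2
    rw [FiberBundle.extChartAt] at h1
    have hr : Set.range ((𝓡 D).prod 𝓘(ℝ, EuclideanSpace ℂ (Fin n))) = Set.univ :=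
      ModelWithCorners.range_eq_univ _
    rw [hr, contDiffWithinAt_univ] at h1
    have hpt : e w = (x₀, u) := e.apply_mk_symm hx₀ u
    have h2 : ContDiffAt ℝ 1 G (ψ (e w).1, (e w).2) := h1
    rw [hpt] at h2
    exact h2
  refine ⟨fun k x => G (x, b k), fun k => ?_, ?_⟩
  · exact ContDiffAt.comp (g := G) (f := fun x => (x, b k)) (φ v₀) (hG (b k))
      (contDiffAt_id.prodMk contDiffAt_const)
  · have hbase : ∀ᶠ v in nhds v₀, ∀ hv : v ∈ Vo, (⟨v, hv⟩ : Vo) ∈ e.baseSet := by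
      have h1 : IsOpen (Subtype.val '' e.baseSet : Set V) :=
        Vo.isOpen.isOpenMap_subtype_val _ e.open_baseSet
      filter_upwards [h1.mem_nhds ⟨x₀, hx₀, rfl⟩] with v hv hvo
      obtain ⟨y, hy, rfl⟩ := hv
      exact hy
    have hsrc : ∀ᶠ v in nhds v₀, v ∈ φ.source := φ.open_source.mem_nhds (mem_chart_source _ v₀)
    filter_upwards [hbase, hsrc] with v hb hs hv w
    have hb' := hb hv
    let L : F →ₗ[ℂ] E := (hFlin ⟨v, hv⟩).mk' ∘ₗ e.symmₗ ℂ ⟨v, hv⟩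
    have hL0 : ∀ u, L u = Fmap ⟨⟨v, hv⟩, e.symm ⟨v, hv⟩ u⟩ := by
      intro u
      have : L u = Fmap ⟨⟨v, hv⟩, e.symmₗ ℂ ⟨v, hv⟩ u⟩ := rfl
      rw [this, Trivialization.coe_symmₗ e hb']
    have hL : ∀ u, L u = G (φ v, u) := by
      intro u
      rw [hL0]
      show _ = Fmap (e.toPartialEquiv.symm (ψ.symm (φ v), u))
      rw [hsym v hv hs, e.mk_symm hb' u]
      rfl
    let u : F := (e ⟨⟨v, hv⟩, w⟩).2
    have hw : Fmap ⟨⟨v, hv⟩, w⟩ = L u := by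
      rw [hL0]
      rw [e.symm_apply_apply_mk hb' w]
    rw [hw]
    have hu : u = ∑ k, u k • b k := by
      have := (EuclideanSpace.basisFun (Fin n) ℂ).sum_repr u
      simpa [b] using this.symm
    rw [hu, map_sum]
    refine Submodule.sum_mem _ fun k _ => ?_
    rw [map_smul, hL]
    exact Submodule.smul_mem _ _ (Submodule.subset_span ⟨k, rfl⟩)

theorem cover_aux {R E V X ι : Type*} [Ring R] [Algebra ℂ R] [FiniteDimensional ℂ R]
    [NormedAddCommGroup E] [NormedSpace ℂ E]
    [FiniteDimensional ℂ E] [Module R E] [IsScalarTower ℂ R E]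
    [TopologicalSpace V] [SecondCountableTopology V]
    [NormedAddCommGroup X] [NormedSpace ℝ X] [FiniteDimensional ℝ X] [Fintype ι]
    (F : V → Submodule R E)
    (hF : ∀ v₀ : V, ∃ (φ : V → X) (a : ι → X → E), ContinuousAt φ v₀ ∧
      (∀ k, ContDiffAt ℝ 1 (a k) (φ v₀)) ∧
      ∀ᶠ v in nhds v₀, F v ≤ Submodule.span R (Set.range fun k => a k (φ v))) :
    dimH (⋃ v, (F v : Set E)) ≤
      ((finrank ℝ X + 2 * (finrank ℂ R * Fintype.card ι) : ℕ) : ENNReal) := by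
  have key : ∀ v₀ : V, ∃ N ∈ nhds v₀, dimH (⋃ v ∈ N, (F v : Set E)) ≤
      ((finrank ℝ X + 2 * (finrank ℂ R * Fintype.card ι) : ℕ) : ENNReal) := by
    intro v₀
    obtain ⟨φ, a, hφ, ha, hv⟩ := hF v₀
    let b := Module.finBasis ℂ R
    let Y := Fin (finrank ℂ R) × ι → ℂ
    let sm : R → E →L[ℂ] E := fun r => LinearMap.toContinuousLinearMap (Algebra.lsmul ℂ ℂ E r)
    have hsm : ∀ r x, sm r x = r • x := fun r x => rfl
    let G : X × Y → E := fun p => ∑ q : Fin (finrank ℂ R) × ι, p.2 q • sm (b q.1) (a q.2 p.1)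
    have hev : ∀ᶠ x in nhds (φ v₀), ∀ k, ContDiffAt ℝ 1 (a k) x :=
      Filter.eventually_all.2 fun k => (ha k).eventually (by simp)
    obtain ⟨r, hr, hball⟩ := Metric.eventually_nhds_iff_ball.1 hev
    let U : Set (X × Y) := Metric.ball (φ v₀) r ×ˢ Set.univ
    have hG : ContDiffOn ℝ 1 G U := by
      intro p hp
      refine ContDiffAt.contDiffWithinAt ?_
      refine ContDiffAt.sum fun q _ => ?_
      have h1 : ContDiffAt ℝ 1 (fun p : X × Y => p.2 q) p := by fun_prop
      have h2 : ContDiffAt ℝ 1 (fun p : X × Y => a q.2 p.1) p :=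
        ContDiffAt.comp (g := a q.2) (f := Prod.fst) p (hball p.1 hp.1 q.2) contDiffAt_fst
      have h3 : ContDiffAt ℝ 1 (fun p : X × Y => sm (b q.1) (a q.2 p.1)) p :=
        (((sm (b q.1)).restrictScalars ℝ).contDiff.contDiffAt).comp p h2
      exact h1.smul h3
    refine ⟨{v | F v ≤ Submodule.span R (Set.range fun k => a k (φ v)) ∧ φ v ∈ Metric.ball (φ v₀) r},
      Filter.Eventually.and hv (hφ.eventually (Metric.ball_mem_nhds _ hr)), ?_⟩
    have hsub : (⋃ v ∈ {v | F v ≤ Submodule.span R (Set.range fun k => a k (φ v)) ∧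
        φ v ∈ Metric.ball (φ v₀) r}, (F v : Set E)) ⊆ G '' U := by
      intro x hx
      simp only [Set.mem_iUnion] at hx
      obtain ⟨v, ⟨hv1, hv2⟩, hx⟩ := hx
      obtain ⟨c, hc⟩ := (Submodule.mem_span_range_iff_exists_fun R).1 (hv1 hx)
      refine ⟨(φ v, fun q => b.repr (c q.2) q.1), ⟨hv2, trivial⟩, ?_⟩
      simp only [G, hsm]
      rw [← hc, Fintype.sum_prod_type, Finset.sum_comm]
      refine Finset.sum_congr rfl fun k _ => ?_
      conv_rhs => rw [← b.sum_repr (c k), Finset.sum_smul]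
      simp [smul_assoc]
    refine (dimH_mono hsub).trans ((hG.dimH_image_le
      ((convex_ball _ _).prod convex_univ) le_rfl).trans ?_)
    refine (dimH_mono (Set.subset_univ _)).trans ?_
    rw [Real.dimH_univ_eq_finrank, Module.finrank_prod, finrank_real_of_complex]
    simp [Y]
  choose N hN hdim using key
  obtain ⟨s, hs, hcov⟩ := TopologicalSpace.countable_cover_nhds hN
  have : (⋃ v, (F v : Set E)) ⊆ ⋃ v₀ ∈ s, ⋃ v ∈ N v₀, (F v : Set E) := by
    intro x hx
    obtain ⟨v, hx⟩ := Set.mem_iUnion.1 hx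
    have : v ∈ ⋃ x ∈ s, N x := by rw [hcov]; trivial
    simp only [Set.mem_iUnion] at this ⊢
    obtain ⟨v₀, h1, h2⟩ := this
    exact ⟨v₀, h1, v, h2, hx⟩
  refine (dimH_mono this).trans ?_
  rw [dimH_bUnion hs]
  exact iSup₂_le fun v₀ _ => hdim v₀

theorem smul_aux {Γ E : Type*} [Group Γ] [AddCommGroup E] [Module ℂ E]
    [Module (MonoidAlgebra ℂ Γ) E] [IsScalarTower ℂ (MonoidAlgebra ℂ Γ) E]
    (ρ : Representation ℂ Γ E)
    (h : ∀ γ x, MonoidAlgebra.single γ (1 : ℂ) • x = ρ γ x) (r : MonoidAlgebra ℂ Γ) (x : E) :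
    r • x = ρ.asAlgebraHom r x := by
  induction r using MonoidAlgebra.induction_on with
  | of γ =>
    simp [h]
  | add f g hf hg => rw [add_smul, hf, hg]; simp
  | smul c f hf => rw [smul_assoc, hf]; simp

theorem simple_aux {Γ S : Type*} [Group Γ] [AddCommGroup S] [Module ℂ S]
    [Module (MonoidAlgebra ℂ Γ) S] [IsScalarTower ℂ (MonoidAlgebra ℂ Γ) S]
    (hS : IsSimpleModule (MonoidAlgebra ℂ Γ) S) :
    IsSimpleModule (MonoidAlgebra ℂ Γ) (Representation.ofModule' (k := ℂ) (G := Γ) S).asModule := by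
  let σ := Representation.ofModule' (k := ℂ) (G := Γ) S
  let e : S ≃ₗ[MonoidAlgebra ℂ Γ] σ.asModule :=
    { (σ.asModuleEquiv.symm.toAddEquiv : S ≃+ σ.asModule) with
      map_smul' := fun r x => by
        have := smul_aux σ (fun γ x => by
          simp [σ, Representation.ofModule']) r x
        simp only [RingHom.id_apply]
        rw [this]
        rfl }
  exact IsSimpleModule.congr e.symm

theorem equiv_aux {Γ S M : Type*} [Group Γ] [AddCommGroup S] [Module ℂ S]
    [Module (MonoidAlgebra ℂ Γ) S] [IsScalarTower ℂ (MonoidAlgebra ℂ Γ) S]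
    [AddCommGroup M] [Module ℂ M]
    [Module (MonoidAlgebra ℂ Γ) M] [IsScalarTower ℂ (MonoidAlgebra ℂ Γ) M]
    (f : S →ₗ[ℂ] M)
    (h : ∀ (γ : Γ) x, f (MonoidAlgebra.single γ (1 : ℂ) • x) =
      MonoidAlgebra.single γ (1 : ℂ) • f x) (r : MonoidAlgebra ℂ Γ) (x : S) :
    f (r • x) = r • f x := by
  induction r using MonoidAlgebra.induction_on with
  | of γ => simpa using h γ x
  | add a b ha hb => rw [add_smul, map_add, ha, hb, add_smul]
  | smul c a ha => rw [smul_assoc, map_smul, ha, smul_assoc]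

theorem hom_aux {Γ E : Type*} [Group Γ] [AddCommGroup E] [Module ℂ E] [FiniteDimensional ℂ E]
    [Module (MonoidAlgebra ℂ Γ) E] [IsScalarTower ℂ (MonoidAlgebra ℂ Γ) E]
    (ρ : Representation ℂ Γ E)
    (h : ∀ γ x, MonoidAlgebra.single γ (1 : ℂ) • x = ρ γ x)
    (S E₁ : Submodule (MonoidAlgebra ℂ Γ) E) :
    finrank ℂ (equivariantHomInto ρ (Representation.ofModule' (k := ℂ) (G := Γ) S) ⊤) ≤
      finrank ℂ (S →ₗ[MonoidAlgebra ℂ Γ] E) ∧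
    finrank ℂ (S →ₗ[MonoidAlgebra ℂ Γ] E₁) ≤
      finrank ℂ (equivariantHomInto ρ (Representation.ofModule' (k := ℂ) (G := Γ) S)
        (E₁.restrictScalars ℂ)) := by
  have hσ : ∀ (γ : Γ) (x : S), Representation.ofModule' (k := ℂ) (G := Γ) S γ x =
      MonoidAlgebra.single γ (1 : ℂ) • x := fun γ x => by
    simp [Representation.ofModule']
  have : FiniteDimensional ℂ S := inferInstanceAs (FiniteDimensional ℂ (S.restrictScalars ℂ))
  constructor
  · let res : (S →ₗ[MonoidAlgebra ℂ Γ] E) →ₗ[ℂ] (S →ₗ[ℂ] E) :=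
      { toFun := fun f => f.restrictScalars ℂ
        map_add' := fun _ _ => rfl
        map_smul' := fun _ _ => rfl }
    have : FiniteDimensional ℂ (S →ₗ[MonoidAlgebra ℂ Γ] E) :=
      Module.Finite.of_injective res (LinearMap.restrictScalars_injective ℂ)
    let T : equivariantHomInto ρ (Representation.ofModule' (k := ℂ) (G := Γ) S) ⊤ →ₗ[ℂ]
        (S →ₗ[MonoidAlgebra ℂ Γ] E) :=
      { toFun := fun f =>
          { toFun := f.1
            map_add' := f.1.map_add
            map_smul' := fun r x => equiv_aux f.1 (fun γ x => by
              rw [← hσ, f.2.1 γ x, h]) r x }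
        map_add' := fun _ _ => rfl
        map_smul' := fun _ _ => rfl }
    refine LinearMap.finrank_le_finrank_of_injective (f := T) ?_
    intro a b hab
    apply Subtype.ext
    ext x
    exact LinearMap.congr_fun hab x
  · let T : (S →ₗ[MonoidAlgebra ℂ Γ] E₁) →ₗ[ℂ]
        equivariantHomInto ρ (Representation.ofModule' (k := ℂ) (G := Γ) S)
        (E₁.restrictScalars ℂ) :=
      { toFun := fun f => ⟨(E₁.subtype ∘ₗ f).restrictScalars ℂ, fun γ x => by
          rw [hσ]; rw [LinearMap.restrictScalars_apply, map_smul, h]; rfl, fun x => (f x).2⟩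
        map_add' := fun _ _ => rfl
        map_smul' := fun _ _ => rfl }
    refine LinearMap.finrank_le_finrank_of_injective (f := T) ?_
    intro a b hab
    ext x
    exact LinearMap.congr_fun (congrArg Subtype.val hab) x

/-- **Lemma 11.6 of the paper (the `Γ`-equivariant version of Lemma 11.4).**
Setting as in Lemma 11.4, with in addition a finite group `Γ` of order `g` acting on `E` by a
`ℂ`-linear representation `ρ`.  Assume every finite-dimensional simple `ℂ[Γ]`-module has
multiplicity `> d′` in `E`, and let `E₁` be a `Γ`-invariant subspace such that (for every
finite-dimensional simple `ℂ[Γ]`-module `W`) the multiplicity `a_W` of `W` in `E₁` satisfies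
`a_W + g·D·(d₁ + … + d_l) < d′` (i.e. `a + g·D·∑dᵢ < d′` for `a` the maximal multiplicity).
Then for every `ε > 0` there is a `Γ`-equivariant automorphism `h` of `E` with `‖h - id‖ < ε`
such that `E₀ = h(E₁)` satisfies `E₀ ∩ F(v) = {0}` for all `v ∈ V`.  (The data `Vo, K, Efam,
Fmap` are not assumed `Γ`-equivariant.) -/
theorem dense_equivariant_subspaces_transverse_to_fiberwise_images
    {D l d' : ℕ} (hD : 1 ≤ D)
    {E : Type} [NormedAddCommGroup E] [NormedSpace ℂ E] [FiniteDimensional ℂ E]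
    {V : Type} [TopologicalSpace V] [T2Space V] [SecondCountableTopology V]
    [ChartedSpace (EuclideanSpace ℝ (Fin D)) V]
    [HasGroupoid V (contDiffGroupoid 1 (𝓡 D))]
    (dI : Fin l → ℕ)
    (Vo : Fin l → Opens V) (K : Fin l → Set V)
    (hKcpt : ∀ i, IsCompact (K i)) (hKV : ∀ i, K i ⊆ (Vo i : Set V))
    (Efam : (i : Fin l) → (Vo i) → Type)
    [∀ i x, AddCommGroup (Efam i x)] [∀ i x, Module ℂ (Efam i x)]
    [∀ i x, TopologicalSpace (Efam i x)]
    [∀ i, TopologicalSpace (TotalSpace (EuclideanSpace ℂ (Fin (dI i))) (Efam i))]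
    [∀ i, FiberBundle (EuclideanSpace ℂ (Fin (dI i))) (Efam i)]
    [∀ i, VectorBundle ℂ (EuclideanSpace ℂ (Fin (dI i))) (Efam i)]
    -- the coordinate changes of each bundle are `C¹`
    (hbundle : ∀ i, ∀ (e e' : Trivialization (EuclideanSpace ℂ (Fin (dI i)))
        (Bundle.TotalSpace.proj (E := Efam i)))
        [MemTrivializationAtlas e] [MemTrivializationAtlas e'],
        ContMDiffOn (𝓡 D)
          𝓘(ℝ, EuclideanSpace ℂ (Fin (dI i)) →L[ℂ] EuclideanSpace ℂ (Fin (dI i))) 1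
          (fun b => (e.coordChangeL ℂ e' b :
            EuclideanSpace ℂ (Fin (dI i)) →L[ℂ] EuclideanSpace ℂ (Fin (dI i))))
          (e.baseSet ∩ e'.baseSet))
    (Fmap : (i : Fin l) → TotalSpace (EuclideanSpace ℂ (Fin (dI i))) (Efam i) → E)
    (hFC1 : ∀ i, ContMDiff ((𝓡 D).prod 𝓘(ℝ, EuclideanSpace ℂ (Fin (dI i)))) 𝓘(ℝ, E) 1 (Fmap i))
    (hFlin : ∀ i (x : Vo i), IsLinearMap ℂ (fun w : Efam i x => Fmap i ⟨x, w⟩))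
    -- the finite group `Γ` and its representation `ρ` on `E`
    (Γ : Type) [Group Γ] [Fintype Γ]
    (ρ : Representation ℂ Γ E)
    -- every finite-dimensional simple `ℂ[Γ]`-module has multiplicity `> d′` in `E`
    (hbig : ∀ (W : Type) [AddCommGroup W] [Module ℂ W] (σW : Representation ℂ Γ W),
      IsSimpleModule (MonoidAlgebra ℂ Γ) σW.asModule → FiniteDimensional ℂ W →
      d' < finrank ℂ (equivariantHomInto ρ σW (⊤ : Submodule ℂ E)))
    -- `E₁` is a `Γ`-invariant subspace
    (E₁ : Submodule ℂ E) (hE₁inv : ∀ γ : Γ, Submodule.map (ρ γ) E₁ = E₁)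
    -- `a + g·D·(d₁ + … + d_l) < d′`, where `a` is the maximal multiplicity of a simple
    -- module in `E₁`
    (hdim : ∀ (W : Type) [AddCommGroup W] [Module ℂ W] (σW : Representation ℂ Γ W),
      IsSimpleModule (MonoidAlgebra ℂ Γ) σW.asModule → FiniteDimensional ℂ W →
      finrank ℂ (equivariantHomInto ρ σW E₁) + Fintype.card Γ * (D * (∑ i, dI i)) < d')
    (ε : ℝ) (hε : 0 < ε) :
    ∃ h : E ≃L[ℂ] E,
      (∀ (γ : Γ) (x : E), h (ρ γ x) = ρ γ (h x)) ∧
      ‖(h : E →L[ℂ] E) - ContinuousLinearMap.id ℂ E‖ < ε ∧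
      ∀ v : V,
        (Submodule.map ((h : E →L[ℂ] E) : E →ₗ[ℂ] E) E₁) ⊓
          (⨆ i, ⨆ (hv : v ∈ K i),
            Submodule.span ℂ (Set.range fun w : Efam i ⟨v, hKV i hv⟩ =>
              Fmap i ⟨⟨v, hKV i hv⟩, w⟩)) = ⊥ := by
  classical
  letI : Module (MonoidAlgebra ℂ Γ) E := Module.compHom E ρ.asAlgebraHom.toRingHom
  have hsm : ∀ (r : MonoidAlgebra ℂ Γ) (x : E), r • x = ρ.asAlgebraHom r x := fun _ _ => rfl
  have hsm1 : ∀ γ x, MonoidAlgebra.single γ (1 : ℂ) • x = ρ γ x := fun γ x => by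
    rw [hsm]; simp
  haveI : IsScalarTower ℂ (MonoidAlgebra ℂ Γ) E := ⟨fun c r x => by
    rw [hsm, hsm, map_smul]; rfl⟩
  let T : V → Set E := fun v => {x | ∃ (i : Fin l) (hv : v ∈ K i) (w : Efam i ⟨v, hKV i hv⟩),
    Fmap i ⟨⟨v, hKV i hv⟩, w⟩ = x}
  let F : V → Submodule (MonoidAlgebra ℂ Γ) E := fun v => Submodule.span _ (T v)
  have hinv : ∀ (r : MonoidAlgebra ℂ Γ) (x : E), x ∈ E₁ → r • x ∈ E₁ := by
    intro r x hx
    induction r using MonoidAlgebra.induction_on with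
    | of γ =>
      rw [MonoidAlgebra.of_apply, hsm1, ← hE₁inv γ]
      exact ⟨x, hx, rfl⟩
    | add a b ha hb => rw [add_smul]; exact E₁.add_mem ha hb
    | smul c a ha => rw [smul_assoc]; exact E₁.smul_mem c ha
  let E₂ : Submodule (MonoidAlgebra ℂ Γ) E :=
    { E₁ with smul_mem' := fun r x hx => hinv r x hx }
  have hE₂ : E₂.restrictScalars ℂ = E₁ := rfl
  have hF : ∀ v₀ : V, ∃ (φ : V → EuclideanSpace ℝ (Fin D))
      (a : (Σ i, Fin (dI i)) → EuclideanSpace ℝ (Fin D) → E), ContinuousAt φ v₀ ∧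
      (∀ k, ContDiffAt ℝ 1 (a k) (φ v₀)) ∧
      ∀ᶠ v in nhds v₀, F v ≤ Submodule.span (MonoidAlgebra ℂ Γ)
        (Set.range fun k => a k (φ v)) := by
    intro v₀
    have hloc : ∀ i, ∃ a : Fin (dI i) → EuclideanSpace ℝ (Fin D) → E,
        (∀ k, ContDiffAt ℝ 1 (a k) (chartAt (EuclideanSpace ℝ (Fin D)) v₀ v₀)) ∧
        ∀ᶠ v in nhds v₀, ∀ hv : v ∈ K i, ∀ w : Efam i ⟨v, hKV i hv⟩,
        Fmap i ⟨⟨v, hKV i hv⟩, w⟩ ∈ Submodule.span ℂ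
          (Set.range fun k => a k (chartAt (EuclideanSpace ℝ (Fin D)) v₀ v)) := by
      intro i
      by_cases hi : v₀ ∈ K i
      · obtain ⟨a, ha, hb⟩ := local_frame_aux (Vo i) (Efam i) (Fmap i) (hFC1 i) (hFlin i) v₀
          (hKV i hi)
        exact ⟨a, ha, hb.mono fun v hv hvK w => hv (hKV i hvK) w⟩
      · refine ⟨fun _ _ => 0, fun _ => contDiffAt_const, ?_⟩
        filter_upwards [(hKcpt i).isClosed.isOpen_compl.mem_nhds hi] with v hv hvK
        exact absurd hvK hv
    choose a ha hb using hloc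
    refine ⟨chartAt (EuclideanSpace ℝ (Fin D)) v₀, fun q => a q.1 q.2,
      (chartAt (EuclideanSpace ℝ (Fin D)) v₀).continuousAt (mem_chart_source _ v₀),
      fun q => ha q.1 q.2, ?_⟩
    filter_upwards [Filter.eventually_all.2 hb] with v hv
    refine Submodule.span_le.2 ?_
    rintro _ ⟨i, hvK, w, rfl⟩
    have h1 := hv i hvK w
    have h2 : Submodule.span ℂ
        (Set.range fun k => a i k (chartAt (EuclideanSpace ℝ (Fin D)) v₀ v)) ≤
        (Submodule.span (MonoidAlgebra ℂ Γ) (Set.range fun q : (Σ i, Fin (dI i)) =>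
          a q.1 q.2 (chartAt (EuclideanSpace ℝ (Fin D)) v₀ v))).restrictScalars ℂ := by
      refine Submodule.span_le.2 ?_
      rintro _ ⟨k, rfl⟩
      exact Submodule.subset_span ⟨⟨i, k⟩, rfl⟩
    exact h2 h1
  have hcard : Fintype.card (Σ i, Fin (dI i)) = ∑ i, dI i := by simp
  have hfinR : FiniteDimensional ℂ (MonoidAlgebra ℂ Γ) :=
    Module.Finite.of_basis (MonoidAlgebra.basis Γ ℂ)
  have hrankR : finrank ℂ (MonoidAlgebra ℂ Γ) = Fintype.card Γ :=
    Module.finrank_eq_card_basis (MonoidAlgebra.basis Γ ℂ)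
  have hdimH : ∃ N : ℕ, dimH (⋃ v, (F v : Set E)) ≤ N ∧
      N < 2 * (Fintype.card Γ * (D * (∑ i, dI i))) + 4 := by
    rcases Nat.eq_zero_or_pos (∑ i, dI i) with h0 | hpos
    · refine ⟨0, ?_, by omega⟩
      have hemp : IsEmpty (Σ i, Fin (dI i)) := by
        rw [← Fintype.card_eq_zero_iff, hcard, h0]
      have hsub : (⋃ v, (F v : Set E)) ⊆ {0} := by
        refine Set.iUnion_subset fun v x hx => ?_
        obtain ⟨φ, a, -, -, h3⟩ := hF v
        have := h3.self_of_nhds hx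
        rw [Set.range_eq_empty, Submodule.span_empty] at this
        simpa using this
      exact (dimH_mono hsub).trans (by simp)
    · refine ⟨_, cover_aux F hF, ?_⟩
      rw [hcard, hrankR, finrank_euclideanSpace_fin]
      have hg : 1 ≤ Fintype.card Γ := Fintype.card_pos
      have hx : 1 ≤ Fintype.card Γ * (∑ i, dI i) := Nat.mul_pos hg hpos
      have : Fintype.card Γ * (D * (∑ i, dI i)) = D * (Fintype.card Γ * (∑ i, dI i)) := by ring
      rw [this]
      generalize Fintype.card Γ * (∑ i, dI i) = x at hx
      nlinarith [Nat.mul_le_mul hD hx, mul_nonneg (Nat.zero_le D) (Nat.zero_le x),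
        Nat.mul_le_mul_left D hx, Nat.mul_le_mul_right x hD]
  obtain ⟨N, hN1, hN2⟩ := hdimH
  have hmain : ∀ S : Submodule (MonoidAlgebra ℂ Γ) E, IsSimpleModule (MonoidAlgebra ℂ Γ) S →
      N + 2 * finrank ℂ (S →ₗ[MonoidAlgebra ℂ Γ] E₂) <
        2 * finrank ℂ (S →ₗ[MonoidAlgebra ℂ Γ] E) := by
    intro S hS
    obtain ⟨h1, h2⟩ := hom_aux ρ hsm1 S E₂
    have hfS : FiniteDimensional ℂ S := inferInstanceAs (FiniteDimensional ℂ (S.restrictScalars ℂ))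
    have h3 := hbig S (Representation.ofModule' (k := ℂ) (G := Γ) S) (simple_aux hS) hfS
    have h4 := hdim S (Representation.ofModule' (k := ℂ) (G := Γ) S) (simple_aux hS) hfS
    rw [hE₂] at h2
    omega
  obtain ⟨h, hh1, hh2⟩ := module_aux F N hN1 E₂ hmain _ E₂ le_rfl le_rfl (min ε 1)
    (lt_min hε one_pos)
  set hL := LinearMap.toContinuousLinearMap (h.restrictScalars ℂ) with hLdef
  have hLh : ∀ x, hL x = h x := fun x => rfl
  have hinj : Function.Injective (h.restrictScalars ℂ) := by
    rw [injective_iff_map_eq_zero]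
    intro x hx
    by_contra hx0
    have h1 := (hL - ContinuousLinearMap.id ℂ E).le_opNorm x
    have h2 : (hL - ContinuousLinearMap.id ℂ E) x = - x := by
      have : h x = 0 := hx
      simp [hLh, this]
    rw [h2, norm_neg] at h1
    have h3 : 0 < ‖x‖ := norm_pos_iff.2 hx0
    have h4 := hh1.trans_le (min_le_right ε 1)
    nlinarith
  let H : E ≃L[ℂ] E :=
    (LinearEquiv.ofInjectiveEndo (h.restrictScalars ℂ) hinj).toContinuousLinearEquiv
  have hH : ∀ x, H x = h x := fun x => rfl
  have hHL : (H : E →L[ℂ] E) = hL := by ext x; rfl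
  refine ⟨H, ?_, ?_, ?_⟩
  · intro γ x
    rw [hH, hH, ← hsm1, ← hsm1, map_smul]
  · rw [hHL]
    exact hh1.trans_le (min_le_left _ _)
  · intro v
    rw [eq_bot_iff]
    rintro _ ⟨⟨x, hx, rfl⟩, hx2⟩
    have hle : (⨆ i, ⨆ (hv : v ∈ K i),
            Submodule.span ℂ (Set.range fun w : Efam i ⟨v, hKV i hv⟩ =>
              Fmap i ⟨⟨v, hKV i hv⟩, w⟩)) ≤ (F v).restrictScalars ℂ := by
      refine iSup₂_le fun i hv => Submodule.span_le.2 ?_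
      rintro _ ⟨w, rfl⟩
      exact Submodule.subset_span ⟨i, hv, w, rfl⟩
    have hx0 : x = 0 := hh2 v x hx (hle hx2)
    rw [hx0]
    simp
end

section
/- (Analytic mechanism behind Lemma 9.1 and Proposition 9.4 of the paper: exponential decay of all T-derivatives implies smoothness in the coordinate s = 1/T up to s = 0.) Let k, N ∈ ℕ, let U ⊆ ℝ^k be open, let T₀ ≥ 1, and let f : U × (T₀, ∞) → ℝ^N be a C^∞ map with the following property: for every multi-index α in the U-variables and every integer j ≥ 1 there exist constants C > 0 and c > 0 such that ‖∂_p^α ∂_T^j f(p, T)‖ ≤ C·e^{−c·T} for all (p, T) ∈ U × (T₀, ∞). Then: (a) for every p ∈ U the limit f_∞(p) := lim_{T→∞} f(p, T) exists and f_∞ : U → ℝ^N is C^∞; (b) the function g : U × [0, 1/T₀) → ℝ^N defined by g(p, s) = f(p, 1/s) for s > 0 and g(p, 0) = f_∞(p) is C^n on the set U × [0, 1/T₀) for every n ∈ ℕ (smoothness at points with s = 0 meant in the within-set sense, ContDiffOn), and every partial derivative of g involving at least one differentiation in the s-variable vanishes at every point with s = 0. -/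
open Set Filter

namespace ExpDecay

noncomputable section

open scoped ContDiff Topology

variable {E : Type} [NormedAddCommGroup E] [NormedSpace ℝ E]

/-- partial derivative in the last variable -/
def pT {F : Type} [NormedAddCommGroup F] [NormedSpace ℝ F] (h : E × ℝ → F) : E × ℝ → F :=
  fun x => fderiv ℝ h x (0, 1)

/-- partial derivative in the first variable -/
def pE {F : Type} [NormedAddCommGroup F] [NormedSpace ℝ F] (h : E × ℝ → F) :
    E × ℝ → (E →L[ℝ] F) :=
  fun x => (fderiv ℝ h x).comp (ContinuousLinearMap.inl ℝ E ℝ)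

/-- class of functions all of whose derivatives with at least `J` T-derivatives decay. -/
structure Dec (J : ℕ) (U : Set E) (T₀ : ℝ) {F : Type} [NormedAddCommGroup F] [NormedSpace ℝ F]
    (h : E × ℝ → F) : Prop where
  smooth : ContDiffOn ℝ ∞ h (U ×ˢ Ioi T₀)
  decay : ∀ i j : ℕ, J ≤ j → ∃ C > (0:ℝ), ∃ c > (0:ℝ), ∀ p ∈ U, ∀ T ∈ Ioi T₀,
    ‖iteratedFDerivWithin ℝ i (fun q => (pT^[j] h) (q, T)) U p‖ ≤ C * Real.exp (-c * T)

section
variable {F : Type} [NormedAddCommGroup F] [NormedSpace ℝ F]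
variable {U : Set E} {T₀ : ℝ}

theorem isOpenW (hU : IsOpen U) : IsOpen (U ×ˢ Ioi T₀) := hU.prod isOpen_Ioi

theorem fderiv_smooth (hU : IsOpen U) {h : E × ℝ → F} (hh : ContDiffOn ℝ ∞ h (U ×ˢ Ioi T₀)) :
    ContDiffOn ℝ ∞ (fderiv ℝ h) (U ×ˢ Ioi T₀) :=
  hh.fderiv_of_isOpen (isOpenW hU) (by simp)

theorem pT_smooth (hU : IsOpen U) {h : E × ℝ → F} (hh : ContDiffOn ℝ ∞ h (U ×ˢ Ioi T₀)) :
    ContDiffOn ℝ ∞ (pT h) (U ×ˢ Ioi T₀) :=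
  (fderiv_smooth hU hh).clm_apply contDiffOn_const

theorem pE_smooth (hU : IsOpen U) {h : E × ℝ → F} (hh : ContDiffOn ℝ ∞ h (U ×ˢ Ioi T₀)) :
    ContDiffOn ℝ ∞ (pE h) (U ×ˢ Ioi T₀) :=
  (fderiv_smooth hU hh).clm_comp contDiffOn_const

theorem pTj_smooth (hU : IsOpen U) {h : E × ℝ → F} (hh : ContDiffOn ℝ ∞ h (U ×ˢ Ioi T₀)) (j : ℕ) :
    ContDiffOn ℝ ∞ (pT^[j] h) (U ×ˢ Ioi T₀) := by
  induction j with
  | zero => exact hh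
  | succ j ih => rw [Function.iterate_succ_apply']; exact pT_smooth hU ih

theorem hasF (hU : IsOpen U) {h : E × ℝ → F} (hh : ContDiffOn ℝ ∞ h (U ×ˢ Ioi T₀))
    {x : E × ℝ} (hx : x ∈ U ×ˢ Ioi T₀) : HasFDerivAt h (fderiv ℝ h x) x :=
  ((hh.contDiffAt ((isOpenW hU).mem_nhds hx)).differentiableAt (by simp)).hasFDerivAt

theorem fderiv_eqOn (hU : IsOpen U) {h h' : E × ℝ → F} (e : EqOn h h' (U ×ˢ Ioi T₀)) :
    EqOn (fderiv ℝ h) (fderiv ℝ h') (U ×ˢ Ioi T₀) := fun x hx =>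
  Filter.EventuallyEq.fderiv_eq (e.eventuallyEq_of_mem ((isOpenW hU).mem_nhds hx))

theorem pT_congr (hU : IsOpen U) {h h' : E × ℝ → F} (e : EqOn h h' (U ×ˢ Ioi T₀)) :
    EqOn (pT h) (pT h') (U ×ˢ Ioi T₀) := fun x hx => by
  simp only [pT, fderiv_eqOn hU e hx]

theorem pTj_congr (hU : IsOpen U) {h h' : E × ℝ → F} (e : EqOn h h' (U ×ˢ Ioi T₀)) (j : ℕ) :
    EqOn (pT^[j] h) (pT^[j] h') (U ×ˢ Ioi T₀) := by
  induction j with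
  | zero => exact e
  | succ j ih => simp only [Function.iterate_succ_apply']; exact pT_congr hU ih

theorem comm1 (hU : IsOpen U) {h : E × ℝ → F} (hh : ContDiffOn ℝ ∞ h (U ×ˢ Ioi T₀)) :
    EqOn (pT (pE h)) (pE (pT h)) (U ×ˢ Ioi T₀) := by
  intro x hx
  have hs : IsSymmSndFDerivAt ℝ h x :=
    (hh.contDiffAt ((isOpenW hU).mem_nhds hx)).isSymmSndFDerivAt (by
      rw [minSmoothness_of_isRCLikeNormedField]; exact WithTop.coe_le_coe.2 le_top)
  have h2 := hasF hU (fderiv_smooth hU hh) hx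
  have a : HasFDerivAt (pE h) _ x := h2.clm_comp (hasFDerivAt_const (ContinuousLinearMap.inl ℝ E ℝ) x)
  have b : HasFDerivAt (pT h) _ x := h2.clm_apply (hasFDerivAt_const ((0:E), (1:ℝ)) x)
  ext v
  have := hs (0, 1) (v, 0)
  simp only [pT, pE] at a b ⊢
  rw [a.fderiv, b.fderiv]
  simpa using this

theorem commj (hU : IsOpen U) {h : E × ℝ → F} (hh : ContDiffOn ℝ ∞ h (U ×ˢ Ioi T₀)) (j : ℕ) :
    EqOn (pT^[j] (pE h)) (pE (pT^[j] h)) (U ×ˢ Ioi T₀) := by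
  induction j with
  | zero => exact fun _ _ => rfl
  | succ j ih =>
    simp only [Function.iterate_succ_apply']
    exact (pT_congr hU ih).trans (comm1 hU (pTj_smooth hU hh j))

theorem hasE (hU : IsOpen U) {h : E × ℝ → F} (hh : ContDiffOn ℝ ∞ h (U ×ˢ Ioi T₀))
    {p : E} (hp : p ∈ U) {T : ℝ} (hT : T ∈ Ioi T₀) :
    HasFDerivAt (fun q => h (q, T)) (pE h (p, T)) p := by
  have := HasFDerivAt.comp p (f := fun q : E => (q, T)) (hasF hU hh (x := (p, T)) ⟨hp, hT⟩)
    (hasFDerivAt_prodMk_left (𝕜 := ℝ) p T)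
  exact this

theorem hasT (hU : IsOpen U) {h : E × ℝ → F} (hh : ContDiffOn ℝ ∞ h (U ×ˢ Ioi T₀))
    {p : E} (hp : p ∈ U) {T : ℝ} (hT : T ∈ Ioi T₀) :
    HasDerivAt (fun S => h (p, S)) (pT h (p, T)) T := by
  have := (hasF hU hh (x := (p, T)) ⟨hp, hT⟩).comp_hasDerivAt T
    ((hasDerivAt_const T p).prodMk (hasDerivAt_id T))
  exact this

theorem iter_eq (hU : IsOpen U) {h : E × ℝ → F} (hh : ContDiffOn ℝ ∞ h (U ×ˢ Ioi T₀))
    {p : E} (hp : p ∈ U) (j : ℕ) :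
    ∀ T ∈ Ioi T₀, iteratedDerivWithin j (fun S => h (p, S)) (Ioi T₀) T = (pT^[j] h) (p, T) := by
  induction j with
  | zero => intro T hT; simp
  | succ j ih =>
    intro T hT
    rw [iteratedDerivWithin_succ, derivWithin_congr ih (ih T hT), Function.iterate_succ_apply',
      derivWithin_of_isOpen isOpen_Ioi hT]
    exact (hasT hU (pTj_smooth hU hh j) hp hT).deriv

theorem Dec.toE (hU : IsOpen U) {J : ℕ} {h : E × ℝ → F} (hh : Dec J U T₀ h) :
    Dec J U T₀ (pE h) := by
  refine ⟨pE_smooth hU hh.smooth, fun i j hj => ?_⟩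
  obtain ⟨C, hC, c, hc, H⟩ := hh.decay (i + 1) j hj
  refine ⟨C, hC, c, hc, fun p hp T hT => ?_⟩
  have e : EqOn (fun q => (pT^[j] (pE h)) (q, T))
      (fderivWithin ℝ (fun q => (pT^[j] h) (q, T)) U) U := by
    intro q hq
    rw [fderivWithin_of_isOpen hU hq, (hasE hU (pTj_smooth hU hh.smooth j) hq hT).fderiv]
    exact commj hU hh.smooth j ⟨hq, hT⟩
  rw [iteratedFDerivWithin_congr e hp, norm_iteratedFDerivWithin_fderivWithin hU.uniqueDiffOn hp]
  exact H p hp T hT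

theorem Dec.toT (hU : IsOpen U) {h : E × ℝ → F} (hh : Dec 0 U T₀ h) :
    Dec 0 U T₀ (pT h) :=
  ⟨pT_smooth hU hh.smooth, fun i j _ => by
    simpa only [Function.iterate_succ_apply] using hh.decay i (j + 1) (Nat.zero_le _)⟩

/-- limit -/
def flim (h : E × ℝ → F) (p : E) : F := limUnder atTop (fun T => h (p, T))

theorem Dec.lim [CompleteSpace F] (hU : IsOpen U) {h : E × ℝ → F} (hh : Dec 1 U T₀ h) :
    ∃ C > (0:ℝ), ∃ c > (0:ℝ), ∀ p ∈ U, Tendsto (fun T => h (p, T)) atTop (𝓝 (flim h p)) ∧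
      ∀ T ∈ Ioi T₀, ‖h (p, T) - flim h p‖ ≤ C * Real.exp (-c * T) := by
  obtain ⟨C, hC, c, hc, H⟩ := hh.decay 0 1 le_rfl
  simp only [norm_iteratedFDerivWithin_zero, Function.iterate_one] at H
  have key : ∀ p ∈ U, ∀ a ∈ Ioi T₀, ∀ b, a ≤ b →
      ‖h (p, b) - h (p, a)‖ ≤ C / c * Real.exp (-c * a) := by
    intro p hp a ha b hab
    have hd : ∀ x ∈ Icc a b, HasDerivAt (fun S => h (p, S) - h (p, a)) (pT h (p, x)) x :=
      fun x hx => (hasT hU hh.smooth hp (lt_of_lt_of_le ha hx.1)).sub_const _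
    have := image_norm_le_of_norm_deriv_right_le_deriv_boundary
      (f := fun S => h (p, S) - h (p, a)) (f' := fun x => pT h (p, x)) (a := a) (b := b)
      (fun x hx => (hd x hx).continuousAt.continuousWithinAt)
      (fun x hx => (hd x (Ico_subset_Icc_self hx)).hasDerivWithinAt)
      (B := fun x => C / c * Real.exp (-c * a) - C / c * Real.exp (-c * x))
      (B' := fun x => C * Real.exp (-c * x)) (by simp)
      (fun x => by
        have := (((hasDerivAt_id x).const_mul (-c)).exp.const_mul (C / c)).const_sub
          (C / c * Real.exp (-c * a))
        refine this.congr_deriv ?_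
        simp only [id]
        field_simp)
      (fun x hx => H p hp x (lt_of_lt_of_le ha hx.1)) (right_mem_Icc.2 hab)
    refine this.trans ?_
    have : 0 ≤ C / c * Real.exp (-c * b) := by positivity
    linarith
  have hexp : Tendsto (fun T => C / c * Real.exp (-c * T)) atTop (𝓝 0) := by
    have : Tendsto (fun T : ℝ => -c * T) atTop atBot :=
      tendsto_id.const_mul_atTop_of_neg (by linarith)
    simpa using (Real.tendsto_exp_atBot.comp this).const_mul (C / c)
  refine ⟨C / c, by positivity, c, hc, fun p hp => ?_⟩
  have hT : Tendsto (fun T => h (p, T)) atTop (𝓝 (flim h p)) := by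
    apply tendsto_nhds_limUnder
    apply cauchy_map_iff_exists_tendsto.1
    rw [Metric.cauchy_iff]
    refine ⟨inferInstance, fun ε hε => ?_⟩
    obtain ⟨a, ha, haT⟩ := ((hexp.eventually (gt_mem_nhds (half_pos hε))).and
      (eventually_gt_atTop T₀)).exists
    refine ⟨(fun T => h (p, T)) '' Ici a, image_mem_map (Ici_mem_atTop a), ?_⟩
    rintro _ ⟨x, hx, rfl⟩ _ ⟨y, hy, rfl⟩
    have h1 := key p hp a haT x hx
    have h2 := key p hp a haT y hy
    rw [dist_eq_norm]
    calc ‖h (p, x) - h (p, y)‖ = ‖(h (p, x) - h (p, a)) - (h (p, y) - h (p, a))‖ := by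
          congr 1; abel
      _ ≤ _ := norm_sub_le _ _
      _ < ε := by linarith
  refine ⟨hT, fun T hTT => ?_⟩
  rw [norm_sub_rev]
  refine le_of_tendsto (hT.sub_const _).norm ?_
  filter_upwards [eventually_ge_atTop T] with b hb using key p hp T hTT b hb

theorem Dec.hasFDerivAt_flim [CompleteSpace F] (hU : IsOpen U) {h : E × ℝ → F}
    (hh : Dec 1 U T₀ h) {p : E} (hp : p ∈ U) :
    HasFDerivAt (flim h) (flim (pE h) p) p := by
  obtain ⟨C, hC, c, hc, H⟩ := hh.lim hU
  obtain ⟨C', hC', c', hc', H'⟩ := (hh.toE hU).lim hU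
  have ht : Tendsto (fun n : ℕ => T₀ + 1 + (n:ℝ)) atTop atTop :=
    tendsto_atTop_add_const_left _ _ tendsto_natCast_atTop_atTop
  have hm : ∀ n : ℕ, T₀ + 1 + (n:ℝ) ∈ Ioi T₀ := fun n => by
    have : (0:ℝ) ≤ n := n.cast_nonneg
    simp only [mem_Ioi]; linarith
  refine hasFDerivAt_of_tendstoUniformlyOn (l := atTop)
    (f := fun (n : ℕ) q => h (q, T₀ + 1 + n)) (f' := fun (n : ℕ) q => pE h (q, T₀ + 1 + n)) hU
    ?_ (fun n q hq => hasE hU hh.smooth hq (hm n)) (fun q hq => (H q hq).1.comp ht) hp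
  rw [Metric.tendstoUniformlyOn_iff]
  intro ε hε
  have hexp : Tendsto (fun n : ℕ => C' * Real.exp (-c' * (T₀ + 1 + (n:ℝ)))) atTop (𝓝 0) := by
    have : Tendsto (fun n : ℕ => -c' * (T₀ + 1 + (n:ℝ))) atTop atBot :=
      ht.const_mul_atTop_of_neg (by linarith)
    simpa using (Real.tendsto_exp_atBot.comp this).const_mul C'
  filter_upwards [hexp.eventually (gt_mem_nhds hε)] with n hn q hq
  rw [dist_comm, dist_eq_norm]
  exact ((H' q hq).2 _ (hm n)).trans_lt hn

end

theorem flim_contDiff {U : Set E} {T₀ : ℝ} (hU : IsOpen U) (n : ℕ) :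
    ∀ {F : Type} [NormedAddCommGroup F] [NormedSpace ℝ F] [CompleteSpace F] {h : E × ℝ → F},
    Dec 1 U T₀ h → ContDiffOn ℝ n (flim h) U := by
  induction n with
  | zero =>
    intro F _ _ _ h hh
    exact contDiffOn_zero.2 fun p hp =>
      (hh.hasFDerivAt_flim hU hp).continuousAt.continuousWithinAt
  | succ n ih =>
    intro F _ _ _ h hh
    push_cast
    rw [contDiffOn_succ_iff_fderiv_of_isOpen hU]
    refine ⟨fun p hp => (hh.hasFDerivAt_flim hU hp).differentiableAt.differentiableWithinAt,
      by simp, ?_⟩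
    exact (ih (hh.toE hU)).congr fun p hp => (hh.hasFDerivAt_flim hU hp).fderiv

theorem flim_decay {U : Set E} {T₀ : ℝ} (hU : IsOpen U) (i : ℕ) :
    ∀ {F : Type} [NormedAddCommGroup F] [NormedSpace ℝ F] [CompleteSpace F] {h : E × ℝ → F},
    Dec 1 U T₀ h → ∃ C > (0:ℝ), ∃ c > (0:ℝ), ∀ p ∈ U, ∀ T ∈ Ioi T₀,
    ‖iteratedFDerivWithin ℝ i (fun q => h (q, T) - flim h q) U p‖ ≤ C * Real.exp (-c * T) := by
  induction i with
  | zero =>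
    intro F _ _ _ h hh
    obtain ⟨C, hC, c, hc, H⟩ := hh.lim hU
    exact ⟨C, hC, c, hc, fun p hp T hT => by simpa using (H p hp).2 T hT⟩
  | succ i ih =>
    intro F _ _ _ h hh
    obtain ⟨C, hC, c, hc, H⟩ := ih (hh.toE hU)
    refine ⟨C, hC, c, hc, fun p hp T hT => ?_⟩
    rw [← norm_iteratedFDerivWithin_fderivWithin hU.uniqueDiffOn hp]
    have e : EqOn (fderivWithin ℝ (fun q => h (q, T) - flim h q) U)
        (fun q => pE h (q, T) - flim (pE h) q) U := by
      intro q hq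
      rw [fderivWithin_of_isOpen hU hq]
      exact ((hasE hU hh.smooth hq hT).sub (hh.hasFDerivAt_flim hU hq)).fderiv
    rw [iteratedFDerivWithin_congr e hp]
    exact H p hp T hT

theorem Dec.sub_flim {U : Set E} {T₀ : ℝ} (hU : IsOpen U)
    {F : Type} [NormedAddCommGroup F] [NormedSpace ℝ F] [CompleteSpace F] {h : E × ℝ → F}
    (hh : Dec 1 U T₀ h) : Dec 0 U T₀ (fun x => h x - flim h x.1) := by
  refine ⟨hh.smooth.sub ((contDiffOn_infty.2 fun n => flim_contDiff hU n hh).comp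
    contDiffOn_fst fun x hx => hx.1), fun i j _ => ?_⟩
  rcases j with _ | j
  · exact flim_decay hU i hh
  · obtain ⟨C, hC, c, hc, H⟩ := hh.decay i (j + 1) (by omega)
    refine ⟨C, hC, c, hc, fun p hp T hT => ?_⟩
    have e1 : EqOn (pT (fun x => h x - flim h x.1)) (pT h) (U ×ˢ Ioi T₀) := by
      intro x hx
      have := (hasF hU hh.smooth hx).sub ((hh.hasFDerivAt_flim hU hx.1).comp x hasFDerivAt_fst)
      have e := this.fderiv
      simp only [pT]
      change fderiv ℝ (h - flim h ∘ Prod.fst) x (0, 1) = _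
      rw [e]; simp
    have e : EqOn (fun q => (pT^[j+1] (fun x => h x - flim h x.1)) (q, T))
        (fun q => (pT^[j+1] h) (q, T)) U := fun q hq => by
      simp only [Function.iterate_succ_apply]
      exact pTj_congr hU e1 j ⟨hq, hT⟩
    rw [iteratedFDerivWithin_congr e hp]
    exact H p hp T hT

/-- flat extension -/
def G {F : Type} [NormedAddCommGroup F] [NormedSpace ℝ F] (m : ℕ) (h : E × ℝ → F)
    (x : E × ℝ) : F := if x.2 ≤ 0 then 0 else (x.2⁻¹) ^ m • h (x.1, x.2⁻¹)

theorem hasFDerivAt_G {U : Set E} {T₀ : ℝ} (hU : IsOpen U) (hT₀ : 1 ≤ T₀)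
    {F : Type} [NormedAddCommGroup F] [NormedSpace ℝ F] {h : E × ℝ → F}
    (hh : Dec 0 U T₀ h) (m : ℕ) {x : E × ℝ} (hx : x ∈ U ×ˢ Iio T₀⁻¹) :
    HasFDerivAt (G m h) ((G m (pE h) x).comp (ContinuousLinearMap.fst ℝ E ℝ) +
      (ContinuousLinearMap.snd ℝ E ℝ).smulRight
        (-((m:ℝ) • G (m+1) h x) - G (m+2) (pT h) x)) x := by
  have hop : IsOpen (U ×ˢ Iio T₀⁻¹) := hU.prod isOpen_Iio
  have hinv : ∀ s, 0 < s → s < T₀⁻¹ → s⁻¹ ∈ Ioi T₀ := fun s h0 h1 => by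
    rw [mem_Ioi]; exact (lt_inv_comm₀ h0 (by linarith)).1 h1
  rcases lt_trichotomy x.2 0 with hs | hs | hs
  · have e : G m h =ᶠ[𝓝 x] fun _ => 0 := by
      filter_upwards [(isOpen_Iio.preimage continuous_snd).mem_nhds
        (show x ∈ Prod.snd ⁻¹' Iio (0:ℝ) from hs)] with y hy
      simp [G, le_of_lt (show y.2 < 0 from hy)]
    have : HasFDerivAt (G m h) (0 : E × ℝ →L[ℝ] F) x :=
      (hasFDerivAt_const (𝕜 := ℝ) (0:F) x).congr_of_eventuallyEq e
    refine this.congr_fderiv ?_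
    simp only [G, if_pos hs.le]; ext <;> simp
  · have : HasFDerivAt (G m h) (0 : E × ℝ →L[ℝ] F) x := by
      obtain ⟨C, hC, c, hc, H⟩ := hh.decay 0 0 le_rfl
      simp only [norm_iteratedFDerivWithin_zero, Function.iterate_zero, id] at H
      refine Asymptotics.IsBigO.hasFDerivAt (n := 2) ?_ (by norm_num)
      refine Asymptotics.IsBigO.of_bound (C * ((m+2).factorial / c ^ (m+2))) ?_
      filter_upwards [hop.mem_nhds hx] with y hy
      by_cases hy0 : y.2 ≤ 0
      · simp only [G, hy0, if_true, norm_zero]; positivity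
      push Not at hy0
      have hT := hinv _ hy0 hy.2
      have h1 := H y.1 hy.1 _ hT
      set T := y.2⁻¹ with hTdef
      have hTpos : 0 < T := by positivity
      have hle : y.2 ≤ ‖y - x‖ := by
        have := norm_snd_le (y - x)
        rw [Prod.snd_sub, hs, sub_zero, Real.norm_eq_abs, abs_of_pos hy0] at this
        exact this
      have h2 := Real.pow_div_factorial_le_exp (c * T) (by positivity) (m+2)
      have hfac : (0:ℝ) < (m+2).factorial := by exact_mod_cast Nat.factorial_pos _
      have h3 : T ^ (m+2) * Real.exp (-c * T) ≤ (m+2).factorial / c ^ (m+2) := by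
        rw [neg_mul, Real.exp_neg, ← div_eq_mul_inv, div_le_div_iff₀ (Real.exp_pos _) (by positivity)]
        rw [div_le_iff₀ hfac, mul_pow] at h2
        linarith
      have h4 : T ^ m * Real.exp (-c * T) = T ^ (m+2) * Real.exp (-c * T) * y.2 ^ 2 := by
        have : T * y.2 = 1 := inv_mul_cancel₀ hy0.ne'
        calc _ = T ^ m * Real.exp (-c * T) * (T * y.2) ^ 2 := by rw [this]; ring
          _ = _ := by ring
      simp only [G, not_le.2 hy0, if_false]
      rw [norm_smul, norm_pow, Real.norm_of_nonneg hTpos.le, norm_pow, norm_norm]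
      calc T ^ m * ‖h (y.1, T)‖ ≤ T ^ m * (C * Real.exp (-c * T)) := by gcongr
        _ = C * (T ^ (m+2) * Real.exp (-c * T)) * y.2 ^ 2 := by rw [mul_left_comm, h4]; ring
        _ ≤ C * ((m+2).factorial / c ^ (m+2)) * ‖y - x‖ ^ 2 := by gcongr
    refine this.congr_fderiv ?_
    simp only [G, if_pos hs.le]; ext <;> simp
  · have hT := hinv _ hs hx.2
    have e : G m h =ᶠ[𝓝 x] fun y => (y.2⁻¹) ^ m • h (y.1, y.2⁻¹) := by
      filter_upwards [(isOpen_Ioi.preimage continuous_snd).mem_nhds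
        (show x ∈ Prod.snd ⁻¹' Ioi (0:ℝ) from hs)] with y hy
      simp [G, not_le.2 (show 0 < y.2 from hy)]
    have d1 : HasFDerivAt (fun y : E × ℝ => y.2⁻¹) _ x :=
      (hasDerivAt_inv hs.ne').comp_hasFDerivAt x
        (hasFDerivAt_snd (𝕜 := ℝ) (E := E) (F := ℝ) (p := x))
    have d2 : HasFDerivAt (fun y : E × ℝ => (y.2⁻¹) ^ m) _ x :=
      (hasDerivAt_pow m (x.2⁻¹)).comp_hasFDerivAt x d1
    have d3 : HasFDerivAt (fun y : E × ℝ => h (y.1, y.2⁻¹)) _ x :=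
      (hasF hU hh.smooth (x := (x.1, x.2⁻¹)) ⟨hx.1, hT⟩).comp x (hasFDerivAt_fst.prodMk d1)
    have d4 := (d2.smul d3).congr_of_eventuallyEq e
    refine d4.congr_fderiv (Eq.symm ?_)
    have hne := hs.ne'
    apply ContinuousLinearMap.ext
    rintro ⟨v, t⟩
    have hsplit : ∀ w : ℝ, fderiv ℝ h (x.1, x.2⁻¹) (v, w) =
        fderiv ℝ h (x.1, x.2⁻¹) (v, 0) + w • fderiv ℝ h (x.1, x.2⁻¹) (0, 1) := by
      intro w
      rw [← map_smul, ← map_add]; simp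
    have hm : (m:ℝ) * (x.2⁻¹) ^ (m+1) = m * (x.2⁻¹) ^ (m-1) * (x.2⁻¹)^2 := by
      rcases m with _ | m
      · simp
      · simp only [Nat.add_sub_cancel]; ring
    simp [G, not_le.2 hs, pE, pT, -inv_pow]
    rw [hsplit (-((x.2 ^ 2)⁻¹ * t))]
    simp only [smul_add, smul_sub, smul_neg, smul_smul, hm]
    rw [← inv_pow]
    module

theorem G_contDiff {U : Set E} {T₀ : ℝ} (hU : IsOpen U) (hT₀ : 1 ≤ T₀) (n : ℕ) :
    ∀ {F : Type} [NormedAddCommGroup F] [NormedSpace ℝ F] {h : E × ℝ → F} (_ : Dec 0 U T₀ h)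
    (m : ℕ), ContDiffOn ℝ n (G m h) (U ×ˢ Iio T₀⁻¹) := by
  have hop : IsOpen (U ×ˢ Iio T₀⁻¹) := hU.prod isOpen_Iio
  induction n with
  | zero =>
    intro F _ _ h hh m
    exact contDiffOn_zero.2 fun p hp =>
      (hasFDerivAt_G hU hT₀ hh m hp).continuousAt.continuousWithinAt
  | succ n ih =>
    intro F _ _ h hh m
    push_cast
    rw [contDiffOn_succ_iff_fderiv_of_isOpen hop]
    refine ⟨fun p hp => (hasFDerivAt_G hU hT₀ hh m hp).differentiableAt.differentiableWithinAt,
      by simp, ?_⟩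
    refine ContDiffOn.congr ?_ fun p hp => (hasFDerivAt_G hU hT₀ hh m hp).fderiv
    refine ((ih (hh.toE hU) m).clm_comp contDiffOn_const).add ?_
    exact contDiffOn_const.smulRight
      ((contDiffOn_const.smul (ih hh (m+1))).neg.sub (ih (hh.toT hU) (m+2)))

end

end ExpDecay

/-- **Exponential decay of all `T`-derivatives implies smoothness in `s = 1/T` up to `s = 0`
(the analytic mechanism behind Lemma 9.1 and Proposition 9.4 of the paper).**
Let `f : U × (T₀,∞) → ℝ^N` be `C^∞`, and assume that every mixed partial derivative
`∂_p^α ∂_T^j f` with at least one `T`-differentiation (`j ≥ 1`) is bounded by `C e^{-cT}`.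
Then (a) `f(p,T)` converges as `T → ∞` to a `C^∞` function `f_∞` of `p ∈ U`, and
(b) the function `g(p,s) = f(p,1/s)` for `s > 0`, `g(p,0) = f_∞(p)`, is `C^n` on
`U × [0, 1/T₀)` for every `n`, and every partial derivative of `g` involving at least one
`s`-differentiation vanishes at the points with `s = 0`. -/
theorem smooth_in_inverse_variable_of_exponential_decay
    (k N : ℕ) (U : Set (EuclideanSpace ℝ (Fin k))) (hU : IsOpen U)
    (T₀ : ℝ) (hT₀ : 1 ≤ T₀)
    (f : EuclideanSpace ℝ (Fin k) × ℝ → EuclideanSpace ℝ (Fin N))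
    (hf : ContDiffOn ℝ (⊤ : ℕ∞) f (U ×ˢ Ioi T₀))
    (hdecay : ∀ i j : ℕ, 1 ≤ j → ∃ C > (0:ℝ), ∃ c > (0:ℝ), ∀ p ∈ U, ∀ T ∈ Ioi T₀,
      ‖iteratedFDerivWithin ℝ i
          (fun q => iteratedDerivWithin j (fun S => f (q, S)) (Ioi T₀) T) U p‖
        ≤ C * Real.exp (-c * T)) :
    ∃ flim : EuclideanSpace ℝ (Fin k) → EuclideanSpace ℝ (Fin N),
      (∀ p ∈ U, Tendsto (fun T => f (p, T)) atTop (nhds (flim p))) ∧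
      ContDiffOn ℝ (⊤ : ℕ∞) flim U ∧
      (∀ n : ℕ, ContDiffOn ℝ n
        (fun x => if x.2 = 0 then flim x.1 else f (x.1, x.2⁻¹)) (U ×ˢ Ico 0 T₀⁻¹)) ∧
      (∀ i j : ℕ, 1 ≤ j → ∀ p ∈ U,
        iteratedFDerivWithin ℝ i
          (fun q => iteratedDerivWithin j
            (fun s => if s = 0 then flim q else f (q, s⁻¹)) (Ico 0 T₀⁻¹) 0) U p = 0) := by
  have hdec : ExpDecay.Dec 1 U T₀ f := ⟨hf, fun i j hj => by
    obtain ⟨C, hC, c, hc, H⟩ := hdecay i j hj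
    refine ⟨C, hC, c, hc, fun p hp T hT => ?_⟩
    have e : EqOn (fun q => (ExpDecay.pT^[j] f) (q, T))
        (fun q => iteratedDerivWithin j (fun S => f (q, S)) (Ioi T₀) T) U :=
      fun q hq => (ExpDecay.iter_eq hU hf hq j T hT).symm
    rw [iteratedFDerivWithin_congr e hp]
    exact H p hp T hT⟩
  obtain ⟨_, _, _, _, H⟩ := hdec.lim hU
  have hop : IsOpen (U ×ˢ Iio T₀⁻¹) := hU.prod isOpen_Iio
  have hT0 : (0:ℝ) < T₀⁻¹ := by positivity
  have hsm : ∀ n : ℕ, ContDiffOn ℝ n (fun x : EuclideanSpace ℝ (Fin k) × ℝ =>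
      ExpDecay.flim f x.1 + ExpDecay.G 0 (fun x => f x - ExpDecay.flim f x.1) x)
      (U ×ˢ Iio T₀⁻¹) := fun n =>
    ((ExpDecay.flim_contDiff hU n hdec).comp contDiffOn_fst fun x hx => hx.1).add
      (ExpDecay.G_contDiff hU hT₀ n (hdec.sub_flim hU) 0)
  have heq : ∀ (q : EuclideanSpace ℝ (Fin k)) (s : ℝ), 0 ≤ s →
      (if s = 0 then ExpDecay.flim f q else f (q, s⁻¹)) =
      ExpDecay.flim f q + ExpDecay.G 0 (fun x => f x - ExpDecay.flim f x.1) (q, s) := by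
    intro q s hs
    rcases hs.eq_or_lt with rfl | hs
    · simp [ExpDecay.G]
    · simp [ExpDecay.G, hs.ne', not_le.2 hs]
  refine ⟨ExpDecay.flim f, fun p hp => (H p hp).1,
    contDiffOn_infty.2 fun n => ExpDecay.flim_contDiff hU n hdec, fun n => ?_, ?_⟩
  · refine ((hsm n).mono (prod_mono le_rfl Ico_subset_Iio_self)).congr fun x hx => ?_
    exact heq x.1 x.2 hx.2.1
  · intro i j hj p hp
    have e : EqOn (fun q => iteratedDerivWithin j
            (fun s => if s = 0 then ExpDecay.flim f q else f (q, s⁻¹)) (Ico 0 T₀⁻¹) 0)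
            (fun _ => 0) U := by
      intro q hq
      have hc : ContDiffAt ℝ j (fun s : ℝ => ExpDecay.flim f q +
          ExpDecay.G 0 (fun x => f x - ExpDecay.flim f x.1) (q, s)) 0 :=
        ((hsm j).contDiffAt (hop.mem_nhds (x := (q, 0)) ⟨hq, hT0⟩)).comp (0:ℝ)
          (contDiffAt_const.prodMk contDiffAt_id)
      have e1 : EqOn (fun s => if s = 0 then ExpDecay.flim f q else f (q, s⁻¹))
          (fun s : ℝ => ExpDecay.flim f q +
          ExpDecay.G 0 (fun x => f x - ExpDecay.flim f x.1) (q, s)) (Ico 0 T₀⁻¹) :=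
        fun s hs => heq q s hs.1
      have e2 : EqOn (fun s : ℝ => ExpDecay.flim f q +
          ExpDecay.G 0 (fun x => f x - ExpDecay.flim f x.1) (q, s))
          (fun _ => ExpDecay.flim f q) (Iic 0) := by
        intro s hs
        simp [ExpDecay.G, show s ≤ 0 from hs]
      have h0 : (0:ℝ) ∈ Ico 0 T₀⁻¹ := ⟨le_rfl, hT0⟩
      have h0' : (0:ℝ) ∈ Iic (0:ℝ) := mem_Iic.2 le_rfl
      simp only
      rw [iteratedDerivWithin_congr e1 h0,
        iteratedDerivWithin_eq_iteratedDeriv (uniqueDiffOn_Ico _ _) hc h0,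
        ← iteratedDerivWithin_eq_iteratedDeriv (uniqueDiffOn_Iic _) hc h0',
        iteratedDerivWithin_congr e2 h0', iteratedDerivWithin_const,
        if_neg (by omega)]
    rw [iteratedFDerivWithin_congr e hp, iteratedFDerivWithin_fun_zero]
    rfl
end
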